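/- arXiv:1508.07206 — 3 statements merged into one kernel-verified Lean document; each statement's English description precedes it below -/
import Mathlib

section
/- Let ℓ be an odd prime and k a positive integer. For z ∈ ℤ/ℓᵏℤ let v(z) = max{t ∈ {0,…,k} | z ∈ ℓᵗ(ℤ/ℓᵏℤ)} (so v(0) = k). For 0 ≤ i ≤ k and j ∈ {0,2}, let P_{i,j} be the set of monic quadratic polynomials f = X² + bX + c ∈ (ℤ/ℓᵏℤ)[X] with c a unit, with v(Disc f) = i, and such that Disc f is a square in ℤ/ℓᵏℤ if j = 2 and is not a square if j = 0, where Disc f = b² − 4c. Then: #P_{0,0} = (ℓ−1)ℓ^{2k−1}/2; #P_{0,2} = (ℓ−1)(ℓ−2)ℓ^{2k−2}/2; #P_{2t−1,0} = (ℓ−1)² ℓ^{2k−2t−1} for 1 ≤ 2t−1 < k; #P_{2t,0} = #P_{2t,2} = (ℓ−1)² ℓ^{2k−2t−2}/2 for 0 < 2t < k; #P_{k,2} = (ℓ−1)ℓ^{k−1}; and #P_{i,j} = 0 in all remaining cases (namely i odd with j = 2, and i = k with j = 0). -/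
open scoped Classical

/-- Truncated `ℓ`-adic valuation on `ℤ/ℓᵏℤ`: the largest `t ∈ {0,…,k}` with
`z ∈ ℓᵗ(ℤ/ℓᵏℤ)` (so `v 0 = k`). -/
noncomputable def vval (ℓ k : ℕ) (z : ZMod (ℓ ^ k)) : ℕ :=
  Nat.findGreatest (fun t => ∃ y : ZMod (ℓ ^ k), z = (ℓ : ZMod (ℓ ^ k)) ^ t * y) k

/-- `#P_{i,j}`: the number of monic quadratic polynomials `X² + bX + c` over
`ℤ/ℓᵏℤ` with `c` a unit, `v(Disc f) = i`, and discriminant a square (`j = 2`)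
resp. not a square (`j = 0`). -/
noncomputable def Pcount (ℓ k i j : ℕ) : ℕ :=
  Nat.card {p : ZMod (ℓ ^ k) × ZMod (ℓ ^ k) |
    IsUnit p.2 ∧ vval ℓ k (p.1 ^ 2 - 4 * p.2) = i ∧
      (if j = 2 then IsSquare (p.1 ^ 2 - 4 * p.2) else ¬ IsSquare (p.1 ^ 2 - 4 * p.2))}

/-!
Substituting `c = (b² - D) / 4`, one counts the pairs `(b, D)` with `D` an admissible discriminant
and `b² - D` a unit. The last condition depends only on the residues modulo `ℓ`, so each `D` admits
`ℓᵏ⁻¹ (ℓ - r)` values of `b`, where `r` is the number of square roots of `D` in `ℤ/ℓℤ`: by Hensel's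
lemma `r = 0` for a nonsquare unit, `r = 2` for a square unit, and `r = 1` for a nonunit.

As for the admissible discriminants, squares of valuation less than `k` have even valuation, and for
`2t < k` and a unit `u` the element `ℓ²ᵗ u` is a square if and only if `u` is one modulo `ℓ`. Hence
multiplication by a unit that is not a square modulo `ℓ` exchanges the squares and the nonsquares of
valuation `2t`, and there are equally many of both.
-/

section FiniteSets

variable {α β G H : Type*}

lemma ncard_eq_mul_of_ncard_fiber_eq {f : α → β} {A : Set α} {B : Set β} {n : ℕ}
    (hA : A.Finite) (hB : B.Finite) (hf : Set.MapsTo f A B)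
    (hn : ∀ b ∈ B, {a ∈ A | f a = b}.ncard = n) : A.ncard = n * B.ncard := by
  lift A to Finset α using hA
  lift B to Finset β using hB
  simp only [Set.ncard_coe_finset, Finset.mem_coe] at hn ⊢
  rw [Finset.card_eq_sum_card_fiberwise hf, mul_comm]
  refine Finset.sum_const_nat fun b hb => ?_
  rw [← hn b hb, ← Set.ncard_coe_finset, Finset.coe_filter]

lemma ncard_preimage_of_surjective [AddGroup G] [AddGroup H] [Finite G] {f : G →+ H}
    (hf : Function.Surjective f) (S : Set H) :
    (f ⁻¹' S).ncard = Nat.card f.ker * S.ncard := by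
  have := Finite.of_surjective f hf
  refine ncard_eq_mul_of_ncard_fiber_eq (f ⁻¹' S).toFinite S.toFinite (Set.mapsTo_preimage f S)
    fun b hb => ?_
  have fiber_eq : {a ∈ f ⁻¹' S | f a = b} = f ⁻¹' {b} := by
    ext a
    exact ⟨And.right, fun h => ⟨by rwa [Set.mem_preimage, h], h⟩⟩
  rw [fiber_eq, ← Nat.card_coe_set_eq]
  exact Nat.card_congr (AddMonoidHom.fiberEquivKerOfSurjective hf b)

end FiniteSets

section Squares

lemma isSquare_of_isSquare_pow_of_odd {M : Type*} [CommMonoid M] {u : M} {n : ℕ} (hu : IsUnit u)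
    (hn : Odd n) (h : IsSquare (u ^ n)) : IsSquare u := by
  obtain ⟨u, rfl⟩ := hu
  obtain ⟨m, rfl⟩ := hn
  obtain ⟨w, hw⟩ := h
  refine ⟨w * ↑(u⁻¹ ^ m), ?_⟩
  calc (u : M) = u ^ (2 * m + 1) * (↑(u⁻¹ ^ m) * ↑(u⁻¹ ^ m)) := by
        norm_cast
        group
    _ = w * ↑(u⁻¹ ^ m) * (w * ↑(u⁻¹ ^ m)) := by rw [hw, mul_mul_mul_comm]

lemma isSquare_mul_iff_not_isSquare {F : Type*} [Field F] [Finite F] {a b : F}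
    (ha : ¬ IsSquare a) (hb : b ≠ 0) : IsSquare (a * b) ↔ ¬ IsSquare b := by
  have := Fintype.ofFinite F
  have ha₀ : a ≠ 0 := by
    rintro rfl
    exact ha IsSquare.zero
  rw [← quadraticChar_one_iff_isSquare (mul_ne_zero ha₀ hb), map_mul,
    quadraticChar_neg_one_iff_not_isSquare.2 ha, ← quadraticChar_neg_one_iff_not_isSquare,
    neg_one_mul, neg_eq_iff_eq_neg]

variable {F : Type*} [Field F]

lemma ncard_sqrts_zero : {x : F | x ^ 2 = 0}.ncard = 1 := by
  simp only [sq_eq_zero_iff, Set.ofPred_eq_eq_singleton, Set.ncard_singleton]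

lemma ncard_sqrts_of_not_isSquare {a : F} (ha : ¬ IsSquare a) : {x : F | x ^ 2 = a}.ncard = 0 := by
  have : {x : F | x ^ 2 = a} = ∅ :=
    Set.eq_empty_of_forall_notMem fun x hx => ha (hx ▸ IsSquare.sq x)
  rw [this, Set.ncard_empty]

lemma ncard_sqrts_of_isSquare [NeZero (2 : F)] {a : F} (ha : IsSquare a) (ha₀ : a ≠ 0) :
    {x : F | x ^ 2 = a}.ncard = 2 := by
  obtain ⟨w, rfl⟩ := ha.exists_sq
  have hw : w ≠ -w := fun h => pow_ne_zero_iff two_ne_zero |>.1 ha₀ <| by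
    have : 2 * w = 0 := by linear_combination h
    simpa [two_ne_zero] using this
  have : {x : F | x ^ 2 = w ^ 2} = {w, -w} := Set.ext fun x => sq_eq_sq_iff_eq_or_eq_neg
  rw [this, Set.ncard_pair hw]

/-- The fibre over `D` of `(b, c) ↦ b² - 4c`, restricted to units `c`, projects bijectively onto
the set of `b` with `b² - D` a unit. -/
lemma ncard_isUnit_and_discrim_mem {R : Type*} [CommRing R] [Finite R] (h4 : IsUnit (4 : R))
    {S : Set R} {n : ℕ} (hn : ∀ D ∈ S, {b : R | IsUnit (b ^ 2 - D)}.ncard = n) :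
    {p : R × R | IsUnit p.2 ∧ p.1 ^ 2 - 4 * p.2 ∈ S}.ncard = n * S.ncard := by
  refine ncard_eq_mul_of_ncard_fiber_eq (f := fun p => p.1 ^ 2 - 4 * p.2) (Set.toFinite _)
    S.toFinite (fun _ hp => hp.2) fun D hD => ?_
  rw [← hn D hD]
  refine Set.ncard_congr (fun p _ => p.1) ?_ ?_ ?_
  · rintro ⟨b, c⟩ ⟨⟨hc, -⟩, rfl⟩
    simpa only [Set.mem_ofPred_eq, sub_sub_cancel] using h4.mul hc
  · rintro ⟨b, c⟩ ⟨_, c'⟩ ⟨-, hD₁⟩ ⟨-, hD₂⟩ rfl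
    have : 4 * c = 4 * c' := sub_right_injective (hD₁.trans hD₂.symm)
    rw [h4.mul_left_cancel this]
  · intro b (hb : IsUnit (b ^ 2 - D))
    obtain ⟨c, hc⟩ : 4 ∣ b ^ 2 - D := h4.dvd
    have hD' : b ^ 2 - 4 * c = D := by rw [← hc, sub_sub_cancel]
    have hc' : IsUnit c := isUnit_of_mul_isUnit_right (hc ▸ hb : IsUnit (4 * c))
    exact ⟨(b, c), ⟨⟨hc', by rwa [hD']⟩, hD'⟩, rfl⟩

end Squares

section Reduction

variable {d n : ℕ}

lemma natCast_dvd_iff_castHom_eq_zero (h : d ∣ n) (z : ZMod n) :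
    (d : ZMod n) ∣ z ↔ ZMod.castHom h (ZMod d) z = 0 := by
  constructor
  · rintro ⟨y, rfl⟩
    rw [map_mul, map_natCast, ZMod.natCast_self, zero_mul]
  · obtain ⟨m, rfl⟩ := ZMod.intCast_surjective z
    rw [map_intCast, ZMod.intCast_zmod_eq_zero_iff_dvd]
    rintro ⟨q, rfl⟩
    exact ⟨q, by push_cast; rfl⟩

lemma ncard_preimage_castHom [NeZero n] (h : d ∣ n) (S : Set (ZMod d)) :
    (ZMod.castHom h (ZMod d) ⁻¹' S).ncard = n / d * S.ncard := by
  have hf : Function.Surjective (ZMod.castHom h (ZMod d) : ZMod n →+ ZMod d) :=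
    ZMod.castHom_surjective h
  have hker := (ZMod.castHom h (ZMod d) : ZMod n →+ ZMod d).ker.card_mul_index
  rw [AddSubgroup.index_ker, AddMonoidHom.range_eq_top.2 hf, AddSubgroup.card_top, Nat.card_zmod,
    Nat.card_zmod] at hker
  have hd : 0 < d := Nat.pos_of_dvd_of_pos h (NeZero.pos n)
  rw [Nat.div_eq_of_eq_mul_left hd hker.symm]
  exact ncard_preimage_of_surjective hf S

lemma ncard_natCast_dvd [NeZero n] (h : d ∣ n) : {z : ZMod n | (d : ZMod n) ∣ z}.ncard = n / d := by
  have : {z : ZMod n | (d : ZMod n) ∣ z} = ZMod.castHom h (ZMod d) ⁻¹' {0} :=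
    Set.ext (natCast_dvd_iff_castHom_eq_zero h)
  rw [this, ncard_preimage_castHom h, Set.ncard_singleton, mul_one]

lemma natCast_dvd_natCast_iff (h : d ∣ n) (a : ℕ) : (d : ZMod n) ∣ a ↔ d ∣ a := by
  rw [natCast_dvd_iff_castHom_eq_zero h, map_natCast, ZMod.natCast_eq_zero_iff]

end Reduction

section Valuation

variable {ℓ k : ℕ}

lemma vval_le (z : ZMod (ℓ ^ k)) : vval ℓ k z ≤ k :=
  Nat.findGreatest_le k

lemma le_vval_iff_pow_dvd {i : ℕ} (hi : i ≤ k) {z : ZMod (ℓ ^ k)} :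
    i ≤ vval ℓ k z ↔ (ℓ : ZMod (ℓ ^ k)) ^ i ∣ z := by
  have hv : (ℓ : ZMod (ℓ ^ k)) ^ vval ℓ k z ∣ z :=
    Nat.findGreatest_spec (P := fun t => (ℓ : ZMod (ℓ ^ k)) ^ t ∣ z) (Nat.zero_le k) (by simp)
  exact ⟨fun h => (pow_dvd_pow _ h).trans hv, fun h => Nat.le_findGreatest hi h⟩

lemma vval_eq_self_iff {z : ZMod (ℓ ^ k)} : vval ℓ k z = k ↔ z = 0 := by
  rw [← (vval_le z).ge_iff_eq, le_vval_iff_pow_dvd le_rfl, ← Nat.cast_pow, ZMod.natCast_self,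
    zero_dvd_iff]

lemma vval_unit_mul (u : (ZMod (ℓ ^ k))ˣ) (z : ZMod (ℓ ^ k)) :
    vval ℓ k (u * z) = vval ℓ k z :=
  eq_of_forall_le_iff fun i => by
    by_cases hi : i ≤ k
    · rw [le_vval_iff_pow_dvd hi, le_vval_iff_pow_dvd hi, Units.dvd_mul_left]
    · exact iff_of_false (fun h => hi (h.trans (vval_le _))) fun h => hi (h.trans (vval_le _))

lemma vval_pow_mul_of_isUnit (hℓ : 1 < ℓ) (i : ℕ) {u : ZMod (ℓ ^ k)} (hu : IsUnit u) :
    vval ℓ k (ℓ ^ i * u) = min i k := by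
  refine eq_of_forall_le_iff fun m => ?_
  rw [le_min_iff]
  refine (and_iff_left_of_imp fun h => h.trans (vval_le _)).symm.trans (and_congr_left fun hm => ?_)
  rw [le_vval_iff_pow_dvd hm, hu.dvd_mul_right, ← Nat.cast_pow, ← Nat.cast_pow,
    natCast_dvd_natCast_iff (pow_dvd_pow ℓ hm), Nat.pow_dvd_pow_iff_le_right hℓ]

variable [Fact ℓ.Prime]

lemma exists_eq_pow_vval_mul (z : ZMod (ℓ ^ k)) :
    ∃ u, IsUnit u ∧ z = (ℓ : ZMod (ℓ ^ k)) ^ vval ℓ k z * u := by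
  have hℓ : ℓ.Prime := Fact.out
  obtain ⟨d, hd, u, hu, rfl⟩ := ZMod.eq_unit_mul_divisor z
  obtain ⟨i, hi, rfl⟩ := (Nat.dvd_prime_pow hℓ).1 hd
  refine ⟨u, hu, ?_⟩
  rw [Nat.cast_pow, mul_comm, vval_pow_mul_of_isUnit hℓ.one_lt i hu, min_eq_left hi]

lemma vval_eq_zero_iff_isUnit [NeZero k] {z : ZMod (ℓ ^ k)} : vval ℓ k z = 0 ↔ IsUnit z := by
  constructor
  · intro h
    obtain ⟨u, hu, hz⟩ := exists_eq_pow_vval_mul z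
    rwa [hz, h, pow_zero, one_mul]
  · intro hz
    simpa using vval_pow_mul_of_isUnit (Fact.out : ℓ.Prime).one_lt 0 hz

lemma vval_sq (x : ZMod (ℓ ^ k)) : vval ℓ k (x ^ 2) = min (2 * vval ℓ k x) k := by
  obtain ⟨u, hu, hx⟩ := exists_eq_pow_vval_mul x
  rw [← vval_pow_mul_of_isUnit (Fact.out : ℓ.Prime).one_lt _ (hu.pow 2)]
  congr 1
  rw [pow_mul', ← mul_pow, ← hx]

lemma even_vval_of_isSquare {z : ZMod (ℓ ^ k)} (hz : IsSquare z) (hk : vval ℓ k z < k) :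
    Even (vval ℓ k z) := by
  obtain ⟨x, rfl⟩ := hz.exists_sq
  have := vval_sq x
  exact ⟨vval ℓ k x, by omega⟩

lemma ncard_vval_eq {i : ℕ} (hi : i < k) :
    {z : ZMod (ℓ ^ k) | vval ℓ k z = i}.ncard = (ℓ - 1) * ℓ ^ (k - i - 1) := by
  have hℓ : 0 < ℓ := (Fact.out : ℓ.Prime).pos
  have ncard_le_vval {m : ℕ} (hm : m ≤ k) :
      {z : ZMod (ℓ ^ k) | m ≤ vval ℓ k z}.ncard = ℓ ^ (k - m) := by
    simp only [le_vval_iff_pow_dvd hm, ← Nat.cast_pow]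
    rw [ncard_natCast_dvd (pow_dvd_pow ℓ hm), Nat.pow_div hm hℓ]
  have hsub : {z : ZMod (ℓ ^ k) | i + 1 ≤ vval ℓ k z} ⊆ {z | i ≤ vval ℓ k z} :=
    fun z hz => (Nat.le_succ i).trans hz
  have layer : {z : ZMod (ℓ ^ k) | vval ℓ k z = i} =
      {z | i ≤ vval ℓ k z} \ {z | i + 1 ≤ vval ℓ k z} := by
    ext z
    simp only [Set.mem_ofPred_eq, Set.mem_sdiff]
    omega
  obtain ⟨m, rfl⟩ : ∃ m, k = i + 1 + m := Nat.exists_eq_add_of_le hi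
  rw [layer, Set.ncard_sdiff hsub, ncard_le_vval hi.le, ncard_le_vval hi, Nat.sub_one_mul,
    ← pow_succ']
  congr 2
  omega

end Valuation

section Residue

variable {ℓ k : ℕ}

variable (ℓ k) in
/-- Reduction modulo `ℓ`, from `ℤ/ℓᵏℤ` (with `k ≠ 0`) to `ℤ/ℓℤ`. -/
def residueMap [NeZero k] : ZMod (ℓ ^ k) →+* ZMod ℓ :=
  ZMod.castHom (dvd_pow_self ℓ (NeZero.ne k)) (ZMod ℓ)

variable [NeZero k]

lemma residueMap_surjective : Function.Surjective (residueMap ℓ k) :=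
  ZMod.castHom_surjective _

lemma residueMap_eq_zero_iff {z : ZMod (ℓ ^ k)} :
    residueMap ℓ k z = 0 ↔ (ℓ : ZMod (ℓ ^ k)) ∣ z :=
  (natCast_dvd_iff_castHom_eq_zero _ z).symm

lemma isUnit_residueMap_iff {z : ZMod (ℓ ^ k)} : IsUnit (residueMap ℓ k z) ↔ IsUnit z := by
  obtain ⟨m, rfl⟩ := ZMod.intCast_surjective z
  rw [map_intCast, ZMod.coe_int_isUnit_iff_isCoprime, ZMod.coe_int_isUnit_iff_isCoprime,
    Nat.cast_pow, IsCoprime.pow_left_iff (NeZero.pos k)]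

/-- Hensel's lemma for `X² - u`: if `u ≡ w²` modulo `ℓ`, then `u ^ ℓ ^ (k - 1) = (w²) ^ ℓ ^ (k - 1)`
in `ℤ/ℓᵏℤ`, and an odd power of a unit is a square only if the unit is. -/
lemma isSquare_residueMap_iff (hℓ : Odd ℓ) {u : ZMod (ℓ ^ k)} (hu : IsUnit u) :
    IsSquare (residueMap ℓ k u) ↔ IsSquare u := by
  refine ⟨fun ⟨a, ha⟩ => ?_, fun h => h.map _⟩
  obtain ⟨w, rfl⟩ := residueMap_surjective (k := k) a
  have hdvd : (ℓ : ZMod (ℓ ^ k)) ∣ u - w * w := by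
    rw [← residueMap_eq_zero_iff, map_sub, map_mul, ha, sub_self]
  have hpow := dvd_sub_pow_of_dvd_sub hdvd (k - 1)
  rw [Nat.sub_add_cancel NeZero.one_le, ← Nat.cast_pow, ZMod.natCast_self, zero_dvd_iff,
    sub_eq_zero] at hpow
  exact isSquare_of_isSquare_pow_of_odd hu hℓ.pow (hpow ▸ (IsSquare.mul_self w).pow _)

variable [Fact ℓ.Prime]

lemma residueMap_ne_zero_iff_isUnit {z : ZMod (ℓ ^ k)} : residueMap ℓ k z ≠ 0 ↔ IsUnit z :=
  isUnit_iff_ne_zero.symm.trans isUnit_residueMap_iff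

lemma ncard_preimage_residueMap (S : Set (ZMod ℓ)) :
    (residueMap ℓ k ⁻¹' S).ncard = ℓ ^ (k - 1) * S.ncard := by
  have hdiv : ℓ ^ k / ℓ = ℓ ^ (k - 1) := by
    simpa only [pow_one] using Nat.pow_div NeZero.one_le (Fact.out : ℓ.Prime).pos
  rw [← hdiv]
  exact ncard_preimage_castHom _ S

lemma isSquare_pow_mul_iff (hℓ : Odd ℓ) {t : ℕ} (ht : 2 * t < k) {u : ZMod (ℓ ^ k)}
    (hu : IsUnit u) :
    IsSquare ((ℓ : ZMod (ℓ ^ k)) ^ (2 * t) * u) ↔ IsSquare (residueMap ℓ k u) := by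
  have one_lt : 1 < ℓ := (Fact.out : ℓ.Prime).one_lt
  constructor
  · intro h
    obtain ⟨x, hx⟩ := h.exists_sq
    obtain ⟨w, -, hw⟩ := exists_eq_pow_vval_mul x
    have hval : vval ℓ k x = t := by
      have := vval_pow_mul_of_isUnit one_lt (2 * t) hu
      rw [hx, vval_sq] at this
      omega
    have hzero : (ℓ : ZMod (ℓ ^ k)) ^ (2 * t) * (u - w ^ 2) = 0 := by
      rw [hval] at hw
      rw [mul_sub, hx, hw]
      ring
    have hnonunit : ¬ IsUnit (u - w ^ 2) := fun hunit => by
      have := vval_pow_mul_of_isUnit one_lt (2 * t) hunit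
      rw [hzero, vval_eq_self_iff.2 rfl] at this
      omega
    rw [← residueMap_ne_zero_iff_isUnit, not_not, map_sub, sub_eq_zero, map_pow] at hnonunit
    exact hnonunit ▸ IsSquare.sq _
  · intro h
    rw [pow_mul']
    exact (IsSquare.sq _).mul ((isSquare_residueMap_iff hℓ hu).1 h)

lemma ncard_isUnit_sq_sub (D : ZMod (ℓ ^ k)) :
    {b : ZMod (ℓ ^ k) | IsUnit (b ^ 2 - D)}.ncard =
      ℓ ^ (k - 1) * (ℓ - {x : ZMod ℓ | x ^ 2 = residueMap ℓ k D}.ncard) := by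
  have : {b : ZMod (ℓ ^ k) | IsUnit (b ^ 2 - D)} =
      residueMap ℓ k ⁻¹' {x | x ^ 2 = residueMap ℓ k D}ᶜ := by
    ext b
    simp only [Set.mem_ofPred_eq, Set.mem_preimage, Set.mem_compl_iff,
      ← residueMap_ne_zero_iff_isUnit, map_sub, map_pow, ne_eq, sub_eq_zero]
  rw [this, ncard_preimage_residueMap, Set.ncard_compl, Nat.card_zmod]

end Residue

section Discriminants

variable {ℓ k i j : ℕ}

variable (ℓ k i j) in
/-- The discriminants of the polynomials in `P_{i,j}`: the elements of `ℤ/ℓᵏℤ` of valuation `i` that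
are squares if `j = 2` and nonsquares for every other `j`. -/
def discSet : Set (ZMod (ℓ ^ k)) :=
  {z | vval ℓ k z = i ∧ if j = 2 then IsSquare z else ¬ IsSquare z}

lemma mem_discSet_two {z : ZMod (ℓ ^ k)} :
    z ∈ discSet ℓ k i 2 ↔ vval ℓ k z = i ∧ IsSquare z :=
  Iff.rfl

lemma mem_discSet_zero {z : ZMod (ℓ ^ k)} :
    z ∈ discSet ℓ k i 0 ↔ vval ℓ k z = i ∧ ¬ IsSquare z :=
  Iff.rfl

lemma discSet_self_two : discSet ℓ k k 2 = {0} := by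
  ext z
  rw [mem_discSet_two, vval_eq_self_iff, Set.mem_singleton_iff]
  exact and_iff_left_of_imp fun hz => hz ▸ IsSquare.zero

lemma discSet_self_zero : discSet ℓ k k 0 = ∅ :=
  Set.eq_empty_of_forall_notMem fun _ ⟨hz, hsq⟩ => hsq (vval_eq_self_iff.1 hz ▸ IsSquare.zero)

variable [Fact ℓ.Prime]

lemma discSet_two_of_odd (hi : Odd i) (hik : i < k) : discSet ℓ k i 2 = ∅ :=
  Set.eq_empty_of_forall_notMem fun _ ⟨hz, hsq⟩ =>
    Nat.not_even_iff_odd.2 hi (hz ▸ even_vval_of_isSquare hsq (hz ▸ hik))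

lemma discSet_zero_of_odd (hi : Odd i) (hik : i < k) :
    discSet ℓ k i 0 = {z | vval ℓ k z = i} := by
  ext z
  refine and_iff_left_of_imp fun (hz : vval ℓ k z = i) hsq => ?_
  exact Nat.not_even_iff_odd.2 hi (hz ▸ even_vval_of_isSquare hsq (hz ▸ hik))

variable [NeZero k]

lemma exists_unit_mul_mem_discSet_two_iff (hℓ : ℓ ≠ 2) {t : ℕ} (ht : 2 * t < k) :
    ∃ n : (ZMod (ℓ ^ k))ˣ, ∀ z : ZMod (ℓ ^ k),
      n * z ∈ discSet ℓ k (2 * t) 2 ↔ z ∈ discSet ℓ k (2 * t) 0 := by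
  have odd_ℓ : Odd ℓ := (Fact.out : ℓ.Prime).odd_of_ne_two hℓ
  obtain ⟨a, ha⟩ := FiniteField.exists_nonsquare (F := ZMod ℓ) (by rwa [ZMod.ringChar_zmod_n])
  obtain ⟨n, rfl⟩ := residueMap_surjective (k := k) a
  obtain ⟨n, rfl⟩ : IsUnit n := residueMap_ne_zero_iff_isUnit.1 fun h => ha (h ▸ IsSquare.zero)
  refine ⟨n, fun z => ?_⟩
  rw [mem_discSet_two, mem_discSet_zero, vval_unit_mul]
  refine and_congr_right fun hz => ?_
  obtain ⟨u, hu, hzu⟩ := exists_eq_pow_vval_mul z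
  rw [hzu, hz, mul_left_comm, isSquare_pow_mul_iff odd_ℓ ht (n.isUnit.mul hu),
    isSquare_pow_mul_iff odd_ℓ ht hu, map_mul,
    isSquare_mul_iff_not_isSquare ha (residueMap_ne_zero_iff_isUnit.2 hu)]

lemma ncard_discSet_two_eq_ncard_discSet_zero (hℓ : ℓ ≠ 2) {t : ℕ} (ht : 2 * t < k) :
    (discSet ℓ k (2 * t) 2).ncard = (discSet ℓ k (2 * t) 0).ncard := by
  obtain ⟨n, hn⟩ := exists_unit_mul_mem_discSet_two_iff hℓ ht
  exact (Set.ncard_congr' (n.mulLeft.subtypeEquiv fun z => (hn z).symm)).symm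

lemma two_mul_ncard_discSet_zero (hℓ : ℓ ≠ 2) {t : ℕ} (ht : 2 * t < k) :
    2 * (discSet ℓ k (2 * t) 0).ncard = (ℓ - 1) * ℓ ^ (k - 2 * t - 1) := by
  have hsplit := Set.ncard_inter_add_ncard_sdiff_eq_ncard
    {z : ZMod (ℓ ^ k) | vval ℓ k z = 2 * t} {z | IsSquare z}
  change (discSet ℓ k (2 * t) 2).ncard + (discSet ℓ k (2 * t) 0).ncard = _ at hsplit
  rw [← ncard_vval_eq ht, ← hsplit, ncard_discSet_two_eq_ncard_discSet_zero hℓ ht, two_mul]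

lemma two_mul_ncard_discSet_two (hℓ : ℓ ≠ 2) {t : ℕ} (ht : 2 * t < k) :
    2 * (discSet ℓ k (2 * t) 2).ncard = (ℓ - 1) * ℓ ^ (k - 2 * t - 1) := by
  rw [ncard_discSet_two_eq_ncard_discSet_zero hℓ ht, two_mul_ncard_discSet_zero hℓ ht]

end Discriminants

section Polynomials

variable {ℓ k : ℕ} [Fact ℓ.Prime] [NeZero k]

lemma Pcount_eq_mul_ncard_discSet (hℓ : ℓ ≠ 2) {i j r : ℕ}
    (hr : ∀ D ∈ discSet ℓ k i j, {x : ZMod ℓ | x ^ 2 = residueMap ℓ k D}.ncard = r) :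
    Pcount ℓ k i j = ℓ ^ (k - 1) * (ℓ - r) * (discSet ℓ k i j).ncard := by
  have h2 : (2 : ZMod ℓ) ≠ 0 := Ring.two_ne_zero (by rwa [ZMod.ringChar_zmod_n])
  have h4 : IsUnit (4 : ZMod (ℓ ^ k)) := by
    rw [← residueMap_ne_zero_iff_isUnit, map_ofNat, show (4 : ZMod ℓ) = 2 ^ 2 by norm_num]
    exact pow_ne_zero 2 h2
  refine ncard_isUnit_and_discrim_mem (S := discSet ℓ k i j) h4 fun D hD => ?_
  rw [ncard_isUnit_sq_sub, hr D hD]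

lemma Pcount_zero_zero (hℓ : ℓ ≠ 2) :
    Pcount ℓ k 0 0 = ℓ ^ k * (discSet ℓ k 0 0).ncard := by
  have hr : ∀ D ∈ discSet ℓ k 0 0, {x : ZMod ℓ | x ^ 2 = residueMap ℓ k D}.ncard = 0 := by
    rintro D ⟨hD, hsq⟩
    rw [vval_eq_zero_iff_isUnit] at hD
    have odd_ℓ : Odd ℓ := (Fact.out : ℓ.Prime).odd_of_ne_two hℓ
    exact ncard_sqrts_of_not_isSquare fun h => hsq ((isSquare_residueMap_iff odd_ℓ hD).1 h)
  rw [Pcount_eq_mul_ncard_discSet hℓ hr, Nat.sub_zero, pow_sub_one_mul (NeZero.ne k)]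

lemma Pcount_zero_two (hℓ : ℓ ≠ 2) :
    Pcount ℓ k 0 2 = ℓ ^ (k - 1) * (ℓ - 2) * (discSet ℓ k 0 2).ncard := by
  have : NeZero (2 : ZMod ℓ) := ⟨Ring.two_ne_zero (by rwa [ZMod.ringChar_zmod_n])⟩
  refine Pcount_eq_mul_ncard_discSet hℓ ?_
  rintro D ⟨hD, hsq⟩
  rw [vval_eq_zero_iff_isUnit] at hD
  exact ncard_sqrts_of_isSquare (hsq.map _) (residueMap_ne_zero_iff_isUnit.2 hD)

lemma Pcount_of_ne_zero (hℓ : ℓ ≠ 2) {i : ℕ} (hi : i ≠ 0) (j : ℕ) :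
    Pcount ℓ k i j = ℓ ^ (k - 1) * (ℓ - 1) * (discSet ℓ k i j).ncard := by
  refine Pcount_eq_mul_ncard_discSet hℓ ?_
  rintro D ⟨rfl, -⟩
  rw [ne_eq, vval_eq_zero_iff_isUnit, ← residueMap_ne_zero_iff_isUnit, not_not] at hi
  rw [hi, ncard_sqrts_zero]

end Polynomials

/-- The cardinalities of the sets `P_{i,j}` for an odd prime `ℓ` and `k ≥ 1`. -/
theorem stmt_11 (ℓ k : ℕ) (hℓ : ℓ.Prime) (hodd : ℓ ≠ 2) (hk : 1 ≤ k) :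
    2 * Pcount ℓ k 0 0 = (ℓ - 1) * ℓ ^ (2 * k - 1) ∧
    2 * Pcount ℓ k 0 2 = (ℓ - 1) * (ℓ - 2) * ℓ ^ (2 * k - 2) ∧
    (∀ t : ℕ, 1 ≤ t → 2 * t - 1 < k →
      Pcount ℓ k (2 * t - 1) 0 = (ℓ - 1) ^ 2 * ℓ ^ (2 * k - 2 * t - 1)) ∧
    (∀ t : ℕ, 0 < 2 * t → 2 * t < k →
      2 * Pcount ℓ k (2 * t) 0 = (ℓ - 1) ^ 2 * ℓ ^ (2 * k - 2 * t - 2) ∧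
      2 * Pcount ℓ k (2 * t) 2 = (ℓ - 1) ^ 2 * ℓ ^ (2 * k - 2 * t - 2)) ∧
    Pcount ℓ k k 2 = (ℓ - 1) * ℓ ^ (k - 1) ∧
    (∀ i : ℕ, Odd i → i < k → Pcount ℓ k i 2 = 0) ∧
    Pcount ℓ k k 0 = 0 := by
  have : Fact ℓ.Prime := ⟨hℓ⟩
  have : NeZero k := ⟨by omega⟩
  refine ⟨?_, ?_, fun t ht htk => ?_, fun t ht htk => ⟨?_, ?_⟩, ?_, fun i hi hik => ?_, ?_⟩
  · rw [Pcount_zero_zero hodd, mul_left_comm, two_mul_ncard_discSet_zero hodd (t := 0) (by omega),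
      show 2 * k - 1 = k + (k - 2 * 0 - 1) by omega]
    ring
  · rw [Pcount_zero_two hodd, mul_left_comm, two_mul_ncard_discSet_two hodd (t := 0) (by omega),
      show 2 * k - 2 = (k - 1) + (k - 2 * 0 - 1) by omega]
    ring
  · rw [Pcount_of_ne_zero hodd (by omega), discSet_zero_of_odd ⟨t - 1, by omega⟩ htk,
      ncard_vval_eq htk, show 2 * k - 2 * t - 1 = (k - 1) + (k - (2 * t - 1) - 1) by omega]
    ring
  · rw [Pcount_of_ne_zero hodd ht.ne', mul_left_comm, two_mul_ncard_discSet_zero hodd htk,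
      show 2 * k - 2 * t - 2 = (k - 1) + (k - 2 * t - 1) by omega]
    ring
  · rw [Pcount_of_ne_zero hodd ht.ne', mul_left_comm, two_mul_ncard_discSet_two hodd htk,
      show 2 * k - 2 * t - 2 = (k - 1) + (k - 2 * t - 1) by omega]
    ring
  · rw [Pcount_of_ne_zero hodd (by omega), discSet_self_two, Set.ncard_singleton, mul_one, mul_comm]
  · rw [Pcount_of_ne_zero hodd hi.pos.ne', discSet_two_of_odd hi hik, Set.ncard_empty, mul_zero]
  · rw [Pcount_of_ne_zero hodd (by omega), discSet_self_zero, Set.ncard_empty, mul_zero]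
end

section
/- Let ℓ be an odd prime and k a positive integer. For z ∈ ℤ/ℓᵏℤ let v(z) = max{t ∈ {0,…,k} | z ∈ ℓᵗ(ℤ/ℓᵏℤ)}. Let f = X² − TX + S ∈ (ℤ/ℓᵏℤ)[X] be a monic quadratic polynomial with S a unit, set D = T² − 4S, i = v(D), and set j = 2 if D is a square in ℤ/ℓᵏℤ and j = 0 otherwise. Then N(f) := #{σ ∈ GL₂(ℤ/ℓᵏℤ) | the characteristic polynomial of σ is f} is given by: (ℓ−1)ℓ^{2k−1} if i = 0 and j = 0; (ℓ+1)ℓ^{2k−1} if i = 0 and j = 2; (ℓ^{t+1} + ℓᵗ − ℓ − 1)ℓ^{2k−t−1} if i = 2t−1 < k and j = 0; (ℓ^{t+1} + ℓᵗ − 2)ℓ^{2k−t−1} if i = 2t with 0 < i < k and j = 0; (ℓ+1)ℓ^{2k−1} if i = 2t with 0 < i < k and j = 2; (ℓ^{m+1} + ℓᵐ − 1)ℓ^{3m−1} if i = k = 2m (and j = 2); (ℓ^{m+1} + ℓᵐ − 1)ℓ^{3m+1} if i = k = 2m+1 (and j = 2); and 0 in the remaining cases. In particular N(f) depends only on the pair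 (i,j). -/
open Matrix Polynomial
open scoped Classical

/-- `N(f)`: the number of `σ ∈ GL₂(ℤ/ℓᵏℤ)` whose characteristic polynomial is
`f = X² − TX + S`. -/
noncomputable def Ncount (ℓ k : ℕ) (T S : ZMod (ℓ ^ k)) : ℕ :=
  Nat.card {σ : GL (Fin 2) (ZMod (ℓ ^ k)) |
    Matrix.charpoly (σ : Matrix (Fin 2) (Fin 2) (ZMod (ℓ ^ k))) =
      X ^ 2 - C T * X + C S}

/-!
Completing the square, `σ` has characteristic polynomial `X² - TX + S` if and only if the traceless
matrix `2σ - T` squares to the scalar `D = T² - 4S`, so it suffices to count the solutions of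
`x² + bc = D` in `R = ℤ/ℓᵏℤ`, a finite local ring with maximal ideal `𝔪 = (ℓ)`. If `c` is a unit it
determines `b` from `x`; if `c` is not, `x² ≡ D` modulo `𝔪` and Hensel's lemma settles the case of
a unit `D`. If `D ∈ 𝔪` there are `|R|² - |𝔪|²` primitive solutions, and the imprimitive ones, those
with all coordinates in `𝔪`, exist only if `D ∈ 𝔪²`. Dividing by `ℓ`, they become the solutions
for `D / ℓ²` modulo `ℓᵏ⁻²`, each counted `ℓ³` times, and iterating reduces to `D` a unit, to `D` of
valuation one, or to the modulus `1` or `ℓ`.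
-/

open IsLocalRing

section Matrices

variable {R : Type*} [CommRing R]

/-- The solutions `(x, b, c)` of `x² + bc = D`, encoding the traceless matrices `!![x, b; c, -x]`
whose square is the scalar matrix `D`. -/
def tracelessSqrts (D : R) : Set (R × R × R) :=
  {p | p.1 ^ 2 + p.2.1 * p.2.2 = D}

@[simp]
lemma mem_tracelessSqrts {D x b c : R} : (x, b, c) ∈ tracelessSqrts D ↔ x ^ 2 + b * c = D :=
  Iff.rfl

lemma charpoly_fin_two_eq_iff [Nontrivial R] {A : Matrix (Fin 2) (Fin 2) R} {T S : R} :
    A.charpoly = X ^ 2 - C T * X + C S ↔ A.trace = T ∧ A.det = S := by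
  rw [Matrix.charpoly_fin_two]
  refine ⟨fun h ↦ ⟨?_, ?_⟩, by rintro ⟨rfl, rfl⟩; rfl⟩
  · simpa [coeff_X, coeff_C] using congrArg (coeff · 1) h
  · simpa [coeff_X, coeff_C] using congrArg (coeff · 0) h

lemma ncard_charpoly_eq [Nontrivial R] (h2 : IsUnit (2 : R)) (T S : R) :
    {A : Matrix (Fin 2) (Fin 2) R | A.charpoly = X ^ 2 - C T * X + C S}.ncard =
      (tracelessSqrts (T ^ 2 - 4 * S)).ncard := by
  let φ (A : Matrix (Fin 2) (Fin 2) R) : R × R × R := (2 * A 0 0 - T, 2 * A 0 1, 2 * A 1 0)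
  have cancel {a b : R} : 2 * a = 2 * b → a = b := h2.mul_left_cancel
  have cancel_four {a b : R} : 4 * a = 4 * b → a = b := fun h ↦
    cancel (cancel (by linear_combination h))
  refine Set.ncard_congr (fun A _ ↦ φ A) (fun A hA ↦ ?_) (fun A B hA hB h ↦ ?_) ?_
  · obtain ⟨rfl, rfl⟩ := charpoly_fin_two_eq_iff.1 hA
    simp only [φ, mem_tracelessSqrts, trace_fin_two, det_fin_two]
    ring
  · simp only [φ, Prod.mk.injEq, sub_left_inj] at h
    obtain ⟨h00, h01, h10⟩ := h
    have htrace := (charpoly_fin_two_eq_iff.1 hA).1.trans (charpoly_fin_two_eq_iff.1 hB).1.symm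
    rw [trace_fin_two, trace_fin_two, cancel h00, add_right_inj] at htrace
    ext i j
    fin_cases i <;> fin_cases j
    exacts [cancel h00, cancel h01, cancel h10, htrace]
  · rintro ⟨x, b, c⟩ (h : x ^ 2 + b * c = T ^ 2 - 4 * S)
    obtain ⟨r, hr⟩ := h2.exists_right_inv
    refine ⟨!![r * (T + x), r * b; r * c, r * (T - x)], charpoly_fin_two_eq_iff.2 ⟨?_, ?_⟩, ?_⟩
    · rw [trace_fin_two_of]
      linear_combination T * hr
    · rw [det_fin_two_of]
      refine cancel_four ?_
      linear_combination (T ^ 2 - x ^ 2 - b * c) * (2 * r + 1) * hr - h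
    · simp only [φ, of_apply, cons_val', cons_val_zero, cons_val_one, cons_val_fin_one,
        Prod.mk.injEq]
      exact ⟨by linear_combination (T + x) * hr, by linear_combination b * hr,
        by linear_combination c * hr⟩

lemma card_GL_charpoly_eq [Nontrivial R] (h2 : IsUnit (2 : R)) (T : R) {S : R} (hS : IsUnit S) :
    Nat.card {σ : GL (Fin 2) R |
        (σ : Matrix (Fin 2) (Fin 2) R).charpoly = X ^ 2 - C T * X + C S} =
      (tracelessSqrts (T ^ 2 - 4 * S)).ncard := by
  rw [← ncard_charpoly_eq h2, Nat.card_coe_set_eq,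
    ← Set.ncard_image_of_injective _ Units.val_injective]
  refine congrArg Set.ncard (Set.image_preimage_eq_of_subset
    (s := {A : Matrix (Fin 2) (Fin 2) R | A.charpoly = X ^ 2 - C T * X + C S}) fun A hA ↦ ?_)
  have hdet : IsUnit A.det := (charpoly_fin_two_eq_iff.1 hA).2 ▸ hS
  exact (Matrix.isUnit_iff_isUnit_det A).2 hdet

end Matrices

section LocalRing

variable {R : Type*} [CommRing R]

lemma card_maximalIdeal_add_card_units [IsLocalRing R] [Finite R] :
    Nat.card (maximalIdeal R) + Nat.card Rˣ = Nat.card R := by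
  have hunits : Nat.card Rˣ = ((maximalIdeal R : Set R)ᶜ).ncard := by
    rw [← Set.ncard_univ, ← Set.ncard_image_of_injective _ Units.val_injective]
    congr 1
    ext x
    simp only [Set.image_univ, Set.mem_range, Set.mem_compl_iff, SetLike.mem_coe, mem_maximalIdeal,
      mem_nonunits_iff, not_not]
    rfl
  rw [hunits]
  exact Set.ncard_add_ncard_compl (maximalIdeal R : Set R)

lemma not_isSquare_of_notMem_sq [IsLocalRing R] {D : R} (hD : D ∈ maximalIdeal R)
    (hD2 : D ∉ maximalIdeal R ^ 2) : ¬ IsSquare D := by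
  rintro ⟨r, rfl⟩
  have hr : r ∈ maximalIdeal R := or_self_iff.1 (Ideal.IsPrime.mem_or_mem inferInstance hD)
  rw [sq] at hD2
  exact hD2 (Ideal.mul_mem_mul hr hr)

lemma sq_eq_sq_iff_of_isUnit [IsLocalRing R] (h2 : IsUnit (2 : R)) {r x : R}
    (hr : IsUnit r) : x ^ 2 = r ^ 2 ↔ x = r ∨ x = -r := by
  refine ⟨fun h ↦ ?_, by rintro (rfl | rfl) <;> ring⟩
  have hmul : (x - r) * (x + r) = 0 := by linear_combination h
  have hunit : IsUnit ((x + r) + -(x - r)) := by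
    rw [show (x + r) + -(x - r) = 2 * r by ring]
    exact h2.mul hr
  rcases isUnit_or_isUnit_of_isUnit_add hunit with hadd | hsub
  · exact .inl (sub_eq_zero.1 (hadd.mul_left_eq_zero.1 hmul))
  · exact .inr (eq_neg_of_add_eq_zero_left
      (((IsUnit.neg_iff _).1 hsub).mul_right_eq_zero.1 hmul))

lemma henselianLocalRing_of_isArtinianRing [IsLocalRing R] [IsArtinianRing R] :
    HenselianLocalRing R where
  is_henselian f _ a ha hderiv := by
    have hnil {x : R} : x ∈ maximalIdeal R ↔ IsNilpotent x := by
      rw [← Ring.KrullDimLE.nilradical_eq_maximalIdeal, mem_nilradical]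
    have hsimple : IsUnit (aeval a (derivative f)) := by rwa [coe_aeval_eq_eval]
    obtain ⟨b, ⟨hab, hb⟩, -⟩ := existsUnique_nilpotent_sub_and_aeval_eq_zero
      (x := a) (P := f) (by rwa [coe_aeval_eq_eval, ← hnil]) hsimple
    refine ⟨b, by rwa [coe_aeval_eq_eval] at hb, ?_⟩
    rw [← neg_sub, neg_mem_iff]
    exact hnil.2 hab

lemma isSquare_of_sq_sub_mem_maximalIdeal [HenselianLocalRing R] (h2 : IsUnit (2 : R)) {x E : R}
    (hx : IsUnit x) (hE : x ^ 2 - E ∈ maximalIdeal R) : IsSquare E := by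
  have hderiv : IsUnit (eval x (derivative (X ^ 2 - C E))) := by
    simpa [derivative_X_pow, one_add_one_eq_two] using h2.mul hx
  obtain ⟨r, hr, -⟩ := HenselianLocalRing.is_henselian (X ^ 2 - C E)
    (monic_X_pow_sub_C E two_ne_zero) x (by simpa using hE) hderiv
  exact isSquare_iff_exists_sq E |>.2 ⟨r, by simpa [sub_eq_zero, eq_comm (b := E)] using hr⟩

lemma ncard_tracelessSqrts_isUnit [Finite R] {I : Ideal R} (hI : I.IsRadical) {D : R}
    (hD : D ∈ I) :
    {p ∈ tracelessSqrts D | p.2.1 ∈ I ∧ IsUnit p.2.2}.ncard = Nat.card I * Nat.card Rˣ := by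
  let φ (p : R × Rˣ) : R × R × R := (p.1, (D - p.1 ^ 2) * ↑p.2⁻¹, ↑p.2)
  have hφ : φ.Injective := by
    rintro ⟨x, u⟩ ⟨y, v⟩ h
    simp only [φ, Prod.mk.injEq, Units.val_inj] at h
    exact Prod.ext h.1 h.2.2
  suffices himage : {p ∈ tracelessSqrts D | p.2.1 ∈ I ∧ IsUnit p.2.2} =
      φ '' ((I : Set R) ×ˢ Set.univ) by
    rw [himage, Set.ncard_image_of_injective _ hφ, Set.ncard_prod, Set.ncard_univ]
    rfl
  ext ⟨x, b, c⟩
  constructor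
  · rintro ⟨h, hb, u, rfl⟩
    have hx : x ^ 2 ∈ I := by
      rw [← (mem_tracelessSqrts.1 h : x ^ 2 + b * u = D)] at hD
      exact (I.add_mem_iff_left (I.mul_mem_right _ hb)).1 hD
    refine ⟨(x, u), ⟨hI ⟨2, hx⟩, trivial⟩, ?_⟩
    simp only [φ, Prod.mk.injEq, true_and, and_true]
    rw [← (mem_tracelessSqrts.1 h : x ^ 2 + b * u = D), add_sub_cancel_left,
      Units.mul_inv_cancel_right]
  · rintro ⟨⟨y, u⟩, ⟨hy : y ∈ I, -⟩, h⟩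
    simp only [φ, Prod.mk.injEq] at h
    obtain ⟨rfl, rfl, rfl⟩ := h
    refine ⟨?_, I.mul_mem_right _ (I.sub_mem hD (I.pow_mem_of_mem hy 2 two_pos)), u.isUnit⟩
    rw [mem_tracelessSqrts, Units.inv_mul_cancel_right, add_sub_cancel]

lemma exists_isUnit_sq_eq_sub [HenselianLocalRing R] (h2 : IsUnit (2 : R)) {D e : R}
    (hD : IsUnit D) (hsq : IsSquare D) (he : e ∈ maximalIdeal R) :
    ∃ s, IsUnit s ∧ s ^ 2 = D - e := by
  obtain ⟨r, rfl⟩ := (isSquare_iff_exists_sq D).1 hsq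
  have hr : IsUnit r := (isUnit_pow_iff two_ne_zero).1 hD
  obtain ⟨s, hs⟩ := (isSquare_iff_exists_sq _).1
    (isSquare_of_sq_sub_mem_maximalIdeal h2 hr (by rwa [sub_sub_cancel]))
  refine ⟨s, ?_, hs.symm⟩
  by_contra h
  have hs_mem : s ^ 2 ∈ maximalIdeal R := Ideal.pow_mem_of_mem _ h 2 two_pos
  rw [← hs] at hs_mem
  exact (Submodule.sub_mem_iff_left _ he).1 hs_mem hD

variable [IsLocalRing R] [Finite R] {D : R}

lemma ncard_tracelessSqrts_eq_add (D : R) :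
    (tracelessSqrts D).ncard =
      Nat.card R * Nat.card Rˣ + {p ∈ tracelessSqrts D | p.2.2 ∈ maximalIdeal R}.ncard := by
  have hunit :=
    ncard_tracelessSqrts_isUnit (I := (⊤ : Ideal R)) (fun _ _ ↦ trivial) (D := D) trivial
  rw [← Set.ncard_inter_add_ncard_sdiff_eq_ncard (tracelessSqrts D) {p | IsUnit p.2.2}]
  congr 1
  simpa [Set.inter_def] using hunit

lemma ncard_tracelessSqrts_of_not_isSquare (h2 : IsUnit (2 : R)) (hD : IsUnit D)
    (hsq : ¬ IsSquare D) :
    (tracelessSqrts D).ncard + Nat.card R * Nat.card (maximalIdeal R) = Nat.card R ^ 2 := by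
  have := henselianLocalRing_of_isArtinianRing (R := R)
  have hempty : {p ∈ tracelessSqrts D | p.2.2 ∈ maximalIdeal R} = ∅ := by
    refine Set.eq_empty_of_forall_notMem ?_
    rintro ⟨x, b, c⟩ ⟨h, hc⟩
    have hsub : x ^ 2 - D ∈ maximalIdeal R := by
      rw [← (mem_tracelessSqrts.1 h : x ^ 2 + b * c = D), sub_add_cancel_left, neg_mem_iff]
      exact Ideal.mul_mem_left _ b hc
    have hx : IsUnit x := by
      by_contra hx
      have := (Submodule.sub_mem_iff_right _ (Ideal.pow_mem_of_mem _ hx 2 two_pos)).1 hsub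
      exact this hD
    exact hsq (isSquare_of_sq_sub_mem_maximalIdeal h2 hx hsub)
  rw [ncard_tracelessSqrts_eq_add, hempty, Set.ncard_empty, ← card_maximalIdeal_add_card_units]
  ring

lemma ncard_tracelessSqrts_mem_maximalIdeal_of_isSquare (h2 : IsUnit (2 : R)) (hD : IsUnit D)
    (hsq : IsSquare D) :
    {p ∈ tracelessSqrts D | p.2.2 ∈ maximalIdeal R}.ncard =
      2 * (Nat.card R * Nat.card (maximalIdeal R)) := by
  have := henselianLocalRing_of_isArtinianRing (R := R)
  let P : Set (R × R) := Set.univ ×ˢ (maximalIdeal R : Set R)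
  have hroot : ∀ q ∈ P, ∃ s, IsUnit s ∧ s ^ 2 = D - q.1 * q.2 := fun q hq ↦
    exists_isUnit_sq_eq_sub h2 hD hsq (Ideal.mul_mem_left _ q.1 hq.2)
  choose! s hs_unit hs using hroot
  let φ (p : R × R × R) : R × R × R := (p.1 * s p.2, p.2)
  have himage : {p ∈ tracelessSqrts D | p.2.2 ∈ maximalIdeal R} = φ '' ({1, -1} ×ˢ P) := by
    ext ⟨x, q⟩
    constructor
    · rintro ⟨h, hc⟩
      have hq : q ∈ P := ⟨trivial, hc⟩
      have hx : x ^ 2 = s q ^ 2 := (eq_sub_of_add_eq h).trans (hs q hq).symm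
      rcases (sq_eq_sq_iff_of_isUnit h2 (hs_unit q hq)).1 hx with rfl | rfl
      · exact ⟨(1, q), ⟨by simp, hq⟩, by simp [φ]⟩
      · exact ⟨(-1, q), ⟨by simp, hq⟩, by simp [φ]⟩
    · rintro ⟨⟨ε, q'⟩, ⟨hε, hq⟩, h⟩
      obtain ⟨rfl, rfl⟩ := Prod.ext_iff.1 h
      have hε_sq : ε ^ 2 = 1 := by rcases hε with rfl | rfl <;> ring
      refine ⟨?_, hq.2⟩
      change (ε * s q') ^ 2 + q'.1 * q'.2 = D
      rw [mul_pow, hε_sq, one_mul, hs q' hq, sub_add_cancel]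
  have hinj : Set.InjOn φ ({1, -1} ×ˢ P) := by
    rintro ⟨ε, q⟩ ⟨-, hq⟩ ⟨ε', q'⟩ - h
    obtain ⟨hε, rfl⟩ := Prod.ext_iff.1 h
    exact Prod.ext ((hs_unit q hq).mul_right_cancel hε) rfl
  have hne : (1 : R) ≠ -1 := fun h ↦ h2.ne_zero (by linear_combination h)
  rw [himage, hinj.ncard_image, Set.ncard_prod, Set.ncard_prod, Set.ncard_pair hne, Set.ncard_univ]
  rfl

lemma ncard_tracelessSqrts_of_isSquare (h2 : IsUnit (2 : R)) (hD : IsUnit D) (hsq : IsSquare D) :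
    (tracelessSqrts D).ncard = Nat.card R ^ 2 + Nat.card R * Nat.card (maximalIdeal R) := by
  rw [ncard_tracelessSqrts_eq_add, ncard_tracelessSqrts_mem_maximalIdeal_of_isSquare h2 hD hsq,
    ← card_maximalIdeal_add_card_units]
  ring

/-- The solutions of `x² + bc = D` with all three coordinates in the maximal ideal, which are those
that come from smaller rings in the descent. -/
def imprimitiveSqrts (D : R) : Set (R × R × R) :=
  tracelessSqrts D ∩
    (maximalIdeal R : Set R) ×ˢ (maximalIdeal R : Set R) ×ˢ (maximalIdeal R : Set R)

lemma ncard_tracelessSqrts_add_of_mem_maximalIdeal (hD : D ∈ maximalIdeal R) :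
    (tracelessSqrts D).ncard + Nat.card (maximalIdeal R) ^ 2 =
      Nat.card R ^ 2 + (imprimitiveSqrts D).ncard := by
  have hm : (maximalIdeal R).IsRadical := (maximalIdeal.isMaximal R).isPrime.isRadical
  have hunit : ({p ∈ tracelessSqrts D | p.2.2 ∈ maximalIdeal R} ∩ {p | IsUnit p.2.1}).ncard =
      Nat.card (maximalIdeal R) * Nat.card Rˣ := by
    rw [← ncard_tracelessSqrts_isUnit hm hD,
      ← Set.ncard_image_of_injective _
        ((Equiv.refl R).prodCongr (Equiv.prodComm R R)).injective, Equiv.image_eq_preimage_symm]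
    congr 1
    ext ⟨x, b, c⟩
    simp +contextual [mul_comm]
  have hnonunit : {p ∈ tracelessSqrts D | p.2.2 ∈ maximalIdeal R} \ {p | IsUnit p.2.1} =
      imprimitiveSqrts D := by
    ext ⟨x, b, c⟩
    constructor
    · rintro ⟨⟨h, hc⟩, hb⟩
      have hx : x ^ 2 ∈ maximalIdeal R := by
        rw [eq_sub_of_add_eq h]
        exact Ideal.sub_mem _ hD (Ideal.mul_mem_left _ b hc)
      exact ⟨h, hm ⟨2, hx⟩, hb, hc⟩
    · rintro ⟨h, -, hb, hc⟩
      exact ⟨⟨h, hc⟩, hb⟩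
  rw [ncard_tracelessSqrts_eq_add, ← Set.ncard_inter_add_ncard_sdiff_eq_ncard
    {p ∈ tracelessSqrts D | p.2.2 ∈ maximalIdeal R} {p | IsUnit p.2.1}, hunit, hnonunit,
    ← card_maximalIdeal_add_card_units]
  ring

lemma ncard_tracelessSqrts_add_of_notMem_sq (hD : D ∈ maximalIdeal R)
    (hD2 : D ∉ maximalIdeal R ^ 2) :
    (tracelessSqrts D).ncard + Nat.card (maximalIdeal R) ^ 2 = Nat.card R ^ 2 := by
  have hempty : imprimitiveSqrts D = ∅ := by
    refine Set.eq_empty_of_forall_notMem ?_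
    rintro ⟨x, b, c⟩ ⟨h, hx, hb, hc⟩
    refine hD2 (h ▸ Ideal.add_mem _ (Ideal.pow_mem_pow hx 2) ?_)
    rw [sq]
    exact Ideal.mul_mem_mul hb hc
  rw [ncard_tracelessSqrts_add_of_mem_maximalIdeal hD, hempty, Set.ncard_empty, add_zero]

end LocalRing

lemma ncard_tracelessSqrts_zero_of_field {K : Type*} [Field K] [Finite K] :
    (tracelessSqrts (0 : K)).ncard = Nat.card K ^ 2 := by
  have hbot : maximalIdeal K = ⊥ := maximalIdeal_eq_bot
  have himprimitive : imprimitiveSqrts (0 : K) = {0} := by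
    refine Set.eq_singleton_iff_unique_mem.2 ⟨?_, ?_⟩
    · simp [imprimitiveSqrts, tracelessSqrts]
    · rintro ⟨x, b, c⟩ ⟨-, hx, hb, hc⟩
      rw [SetLike.mem_coe, hbot, Ideal.mem_bot] at hx hb hc
      exact Prod.ext hx (Prod.ext hb hc)
  have hcount := ncard_tracelessSqrts_add_of_mem_maximalIdeal (zero_mem (maximalIdeal K))
  rw [himprimitive, Set.ncard_singleton, hbot, Nat.card_unique, one_pow] at hcount
  exact Nat.add_right_cancel hcount

section Descent

lemma ncard_preimage_mul_ncard_range {G H : Type*} [AddGroup G] [AddGroup H] (f : G →+ H)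
    {s : Set H} (hs : s ⊆ Set.range f) :
    (f ⁻¹' s).ncard * (Set.range f).ncard = Nat.card G * s.ncard := by
  have hfiber (t : Set H) (ht : t ⊆ Set.range f) : (f ⁻¹' t).ncard = Nat.card f.ker * t.ncard := by
    have hcomp : f ⁻¹' t = QuotientAddGroup.mk ⁻¹' (QuotientAddGroup.kerLift f ⁻¹' t) := rfl
    rw [hcomp, ← Nat.card_coe_set_eq,
      Nat.card_congr (QuotientAddGroup.preimageMkEquivAddSubgroupProdSet _ _), Nat.card_prod,
      Nat.card_coe_set_eq, Set.ncard_preimage_of_injective_subset_range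
        (QuotientAddGroup.kerLift_injective f)]
    rintro _ hy
    obtain ⟨x, rfl⟩ := ht hy
    exact ⟨QuotientAddGroup.mk x, rfl⟩
  have huniv := hfiber (Set.range f) le_rfl
  rw [Set.preimage_range, Set.ncard_univ] at huniv
  rw [hfiber s hs, huniv]
  ring

variable {R R' : Type*} [CommRing R] [CommRing R']

lemma ncard_prodMap_preimage_mul_ncard_range (f : R →+ R') {s : Set (R' × R' × R')}
    (hs : s ⊆ Set.range f ×ˢ Set.range f ×ˢ Set.range f) :
    (Prod.map f (Prod.map f f) ⁻¹' s).ncard * (Set.range f).ncard ^ 3 =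
      Nat.card R ^ 3 * s.ncard := by
  have hrange : Set.range (Prod.map f (Prod.map f f)) =
      Set.range f ×ˢ Set.range f ×ˢ Set.range f := by
    rw [Set.range_prodMap, Set.range_prodMap]
  have hcount := ncard_preimage_mul_ncard_range (f.prodMap (f.prodMap f)) (s := s)
    (hs.trans hrange.ge)
  simp only [AddMonoidHom.coe_prodMap, hrange, Set.ncard_prod, Nat.card_prod] at hcount
  linear_combination hcount

lemma card_pow_mul_ncard_imprimitiveSqrts [IsLocalRing R] [Finite R] {f : R →+* R'}
    (hf : Function.Surjective f) {a : R} (ha : maximalIdeal R = Ideal.span {a})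
    (hker : ∀ x, f x = 0 ↔ a ^ 2 * x = 0) (D : R) :
    Nat.card R' ^ 3 * (imprimitiveSqrts (a ^ 2 * D)).ncard =
      Nat.card (maximalIdeal R) ^ 3 * (tracelessSqrts (f D)).ncard := by
  let μ : R →+ R := AddMonoidHom.mulLeft a
  have hrange : Set.range μ = (maximalIdeal R : Set R) := by
    ext x
    rw [ha, SetLike.mem_coe, Ideal.mem_span_singleton', Set.mem_range]
    simp only [μ, AddMonoidHom.coe_mulLeft, mul_comm]
  -- After multiplication by `a²`, the equation for `D` only retains its image under `f`.
  have hpreimage : Prod.map μ (Prod.map μ μ) ⁻¹' imprimitiveSqrts (a ^ 2 * D) =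
      Prod.map f (Prod.map f f) ⁻¹' tracelessSqrts (f D) := by
    ext ⟨x, b, c⟩
    have hmem (y : R) : a * y ∈ maximalIdeal R := hrange.le ⟨y, rfl⟩
    have hscale : (a * x) ^ 2 + a * b * (a * c) = a ^ 2 * D ↔
        a ^ 2 * (x ^ 2 + b * c - D) = 0 := by
      rw [← sub_eq_zero]
      ring_nf
    have hmap : f x ^ 2 + f b * f c = f D ↔ f (x ^ 2 + b * c - D) = 0 := by
      rw [map_sub, map_add, map_pow, map_mul, sub_eq_zero]
    simp only [imprimitiveSqrts, μ, Set.mem_preimage, Prod.map_apply, AddMonoidHom.coe_mulLeft,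
      Set.mem_inter_iff, mem_tracelessSqrts, Set.mem_prod, SetLike.mem_coe, hmem, and_self,
      and_true, hscale, hmap, hker]
  have hmul := ncard_prodMap_preimage_mul_ncard_range μ (s := imprimitiveSqrts (a ^ 2 * D))
    (by rw [hrange]; exact Set.inter_subset_right)
  have hred := ncard_prodMap_preimage_mul_ncard_range (f : R →+ R') (s := tracelessSqrts (f D))
    (by simp [hf.range_eq])
  rw [hpreimage, hrange, ← Nat.card_coe_set_eq (maximalIdeal R : Set R)] at hmul
  simp only [AddMonoidHom.coe_coe, hf.range_eq, Set.ncard_univ] at hred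
  refine Nat.eq_of_mul_eq_mul_left (pow_pos (Nat.card_pos (α := R)) 3) ?_
  rw [mul_left_comm, ← hmul, mul_left_comm (Nat.card R ^ 3), ← hred, SetLike.coe_sort_coe]
  ring

end Descent

section ZModPrimePow

lemma castHom_eq_zero_iff_zmod_pow {ℓ : ℕ} [NeZero ℓ] {k : ℕ} (x : ZMod (ℓ ^ (k + 2))) :
    ZMod.castHom (pow_dvd_pow ℓ (Nat.le_add_right k 2)) (ZMod (ℓ ^ k)) x = 0 ↔
      (ℓ : ZMod (ℓ ^ (k + 2))) ^ 2 * x = 0 := by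
  obtain ⟨m, rfl⟩ := ZMod.natCast_zmod_surjective x
  rw [map_natCast, ZMod.natCast_eq_zero_iff, ← Nat.cast_pow, ← Nat.cast_mul,
    ZMod.natCast_eq_zero_iff, pow_add, mul_comm (ℓ ^ k),
    Nat.mul_dvd_mul_iff_left (pow_pos (NeZero.pos ℓ) 2)]

variable {ℓ : ℕ} [hℓ : Fact ℓ.Prime] {k : ℕ}

lemma natCast_mem_nonunits_zmod_prime_pow [NeZero k] {m : ℕ} :
    (m : ZMod (ℓ ^ k)) ∈ nonunits (ZMod (ℓ ^ k)) ↔ ℓ ∣ m := by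
  rw [mem_nonunits_iff,
    ZMod.isUnit_natCast_iff_not_dvd_pow hℓ.out (Nat.pos_of_neZero k), not_not]

instance isLocalRing_zmod_prime_pow [NeZero k] : IsLocalRing (ZMod (ℓ ^ k)) := by
  have : Fact (1 < ℓ ^ k) := ⟨Nat.one_lt_pow (NeZero.ne k) hℓ.out.one_lt⟩
  refine IsLocalRing.of_nonunits_add fun a b ha hb ↦ ?_
  obtain ⟨m, rfl⟩ := ZMod.natCast_zmod_surjective a
  obtain ⟨n, rfl⟩ := ZMod.natCast_zmod_surjective b
  rw [natCast_mem_nonunits_zmod_prime_pow] at ha hb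
  rw [← Nat.cast_add, natCast_mem_nonunits_zmod_prime_pow]
  exact dvd_add ha hb

lemma maximalIdeal_zmod_prime_pow [NeZero k] :
    maximalIdeal (ZMod (ℓ ^ k)) = Ideal.span {(ℓ : ZMod (ℓ ^ k))} := by
  refine le_antisymm (fun x hx ↦ ?_) ?_
  · obtain ⟨m, rfl⟩ := ZMod.natCast_zmod_surjective x
    rw [Ideal.mem_span_singleton]
    exact Nat.cast_dvd_cast (natCast_mem_nonunits_zmod_prime_pow.1 hx)
  · rw [Ideal.span_singleton_le_iff_mem]
    exact natCast_mem_nonunits_zmod_prime_pow.2 dvd_rfl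

lemma card_maximalIdeal_zmod_prime_pow :
    Nat.card (maximalIdeal (ZMod (ℓ ^ (k + 1)))) = ℓ ^ k := by
  have hcard := card_maximalIdeal_add_card_units (R := ZMod (ℓ ^ (k + 1)))
  rw [Nat.card_eq_fintype_card (α := (ZMod _)ˣ), ZMod.card_units_eq_totient, Nat.card_zmod,
    Nat.totient_prime_pow_succ hℓ.out] at hcard
  have htotient : ℓ ^ k + ℓ ^ k * (ℓ - 1) = ℓ ^ (k + 1) := by
    rw [Nat.mul_sub_one, ← pow_succ, Nat.add_sub_cancel' (Nat.pow_le_pow_right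
      hℓ.out.pos k.le_succ)]
  exact Nat.add_right_cancel (hcard.trans htotient.symm)

lemma isUnit_two_zmod_prime_pow (h2 : ℓ ≠ 2) : IsUnit (2 : ZMod (ℓ ^ k)) := by
  have hcoprime : Nat.Coprime 2 (ℓ ^ k) :=
    ((Nat.coprime_primes Nat.prime_two hℓ.out).2 h2.symm).pow_right k
  exact_mod_cast (ZMod.isUnit_iff_coprime 2 (ℓ ^ k)).2 hcoprime

lemma natCast_mul_mem_maximalIdeal (u : ℕ) :
    ((ℓ * u : ℕ) : ZMod (ℓ ^ (k + 2))) ∈ maximalIdeal (ZMod (ℓ ^ (k + 2))) :=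
  natCast_mem_nonunits_zmod_prime_pow.2 (dvd_mul_right ℓ u)

lemma natCast_mul_notMem_maximalIdeal_sq {u : ℕ} (hu : ¬ ℓ ∣ u) :
    ((ℓ * u : ℕ) : ZMod (ℓ ^ (k + 2))) ∉ maximalIdeal (ZMod (ℓ ^ (k + 2))) ^ 2 := by
  rw [maximalIdeal_zmod_prime_pow, Ideal.span_singleton_pow, Ideal.mem_span_singleton]
  rintro ⟨y, hy⟩
  obtain ⟨n, rfl⟩ := ZMod.natCast_zmod_surjective y
  have hmod : ℓ * u ≡ ℓ ^ 2 * n [MOD ℓ ^ 2] :=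
    ((ZMod.natCast_eq_natCast_iff _ _ _).1 (by exact_mod_cast hy)).of_dvd
      (pow_dvd_pow ℓ (Nat.le_add_left 2 k))
  have hdvd : ℓ * ℓ ∣ ℓ * u := by
    rw [← sq]
    exact (hmod.dvd_iff dvd_rfl).2 (dvd_mul_right _ _)
  exact hu (Nat.dvd_of_mul_dvd_mul_left hℓ.out.pos hdvd)

lemma ncard_tracelessSqrts_descent (u : ℕ) :
    (tracelessSqrts (ℓ ^ 2 * u : ZMod (ℓ ^ (k + 2)))).ncard + ℓ ^ (2 * k + 2) =
      ℓ ^ (2 * k + 4) + ℓ ^ 3 * (tracelessSqrts (u : ZMod (ℓ ^ k))).ncard := by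
  have himprimitive := card_pow_mul_ncard_imprimitiveSqrts
    (ZMod.castHom_surjective (pow_dvd_pow ℓ (Nat.le_add_right k 2))) maximalIdeal_zmod_prime_pow
    castHom_eq_zero_iff_zmod_pow (u : ZMod (ℓ ^ (k + 2)))
  have hD : (ℓ ^ 2 * u : ZMod (ℓ ^ (k + 2))) ∈ maximalIdeal (ZMod (ℓ ^ (k + 2))) := by
    rw [maximalIdeal_zmod_prime_pow, Ideal.mem_span_singleton]
    exact (dvd_pow_self _ two_ne_zero).mul_right _
  have hcount := ncard_tracelessSqrts_add_of_mem_maximalIdeal hD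
  simp only [map_natCast, card_maximalIdeal_zmod_prime_pow, Nat.card_zmod] at himprimitive hcount
  have hdescend : (imprimitiveSqrts (ℓ ^ 2 * u : ZMod (ℓ ^ (k + 2)))).ncard =
      ℓ ^ 3 * (tracelessSqrts (u : ZMod (ℓ ^ k))).ncard := by
    refine Nat.eq_of_mul_eq_mul_left (pow_pos (pow_pos hℓ.out.pos k) 3) ?_
    rw [himprimitive]
    ring
  rw [hdescend] at hcount
  rw [show ℓ ^ (2 * k + 2) = (ℓ ^ (k + 1)) ^ 2 by ring, hcount]
  ring

lemma ncard_tracelessSqrts_descent_iterate (t u : ℕ) :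
    ℓ * (tracelessSqrts (ℓ ^ (2 * t) * u : ZMod (ℓ ^ (k + 2 * t)))).ncard +
        (ℓ + 1) * ℓ ^ (2 * k + 3 * t) =
      ℓ ^ (3 * t + 1) * (tracelessSqrts (u : ZMod (ℓ ^ k))).ncard +
        (ℓ + 1) * ℓ ^ (2 * k + 4 * t) := by
  induction t with
  | zero => simp
  | succ t ih =>
    have hstep := ncard_tracelessSqrts_descent (ℓ := ℓ) (k := k + 2 * t) (ℓ ^ (2 * t) * u)
    rw [show k + 2 * (t + 1) = k + 2 * t + 2 by ring,
      show (ℓ ^ (2 * (t + 1)) * u : ZMod (ℓ ^ (k + 2 * t + 2))) =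
        ℓ ^ 2 * (ℓ ^ (2 * t) * u : ℕ) by push_cast; ring]
    push_cast at hstep ⊢
    linear_combination ℓ * hstep + ℓ ^ 3 * ih

end ZModPrimePow

section Valuation

lemma vval_eq_iff {ℓ k i : ℕ} {D : ZMod (ℓ ^ k)} :
    vval ℓ k D = i ↔ i ≤ k ∧ (ℓ : ZMod (ℓ ^ k)) ^ i ∣ D ∧
      ∀ ⦃j⦄, i < j → j ≤ k → ¬ (ℓ : ZMod (ℓ ^ k)) ^ j ∣ D := by
  have hdvd : (i ≠ 0 → (ℓ : ZMod (ℓ ^ k)) ^ i ∣ D) ↔ (ℓ : ZMod (ℓ ^ k)) ^ i ∣ D := by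
    rcases eq_or_ne i 0 with rfl | hi <;> simp [*]
  rw [vval, Nat.findGreatest_eq_iff, ← hdvd]
  rfl

lemma eq_zero_of_vval_eq {ℓ k : ℕ} {D : ZMod (ℓ ^ k)} (hv : vval ℓ k D = k) : D = 0 := by
  have hdvd := (vval_eq_iff.1 hv).2.1
  rwa [← Nat.cast_pow, ZMod.natCast_self, zero_dvd_iff] at hdvd

lemma exists_eq_pow_mul_of_vval_lt {ℓ k i : ℕ} [NeZero (ℓ ^ k)] {D : ZMod (ℓ ^ k)}
    (hv : vval ℓ k D = i) (hi : i < k) : ∃ u : ℕ, ¬ ℓ ∣ u ∧ D = ℓ ^ i * u := by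
  obtain ⟨-, ⟨y, hy⟩, hmax⟩ := vval_eq_iff.1 hv
  obtain ⟨u, rfl⟩ := ZMod.natCast_zmod_surjective y
  refine ⟨u, ?_, hy⟩
  rintro ⟨w, rfl⟩
  refine hmax i.lt_succ_self hi ⟨w, ?_⟩
  rw [hy, Nat.cast_mul, pow_succ, mul_assoc]

lemma exists_eq_pow_two_mul_mul_of_vval_lt {ℓ k t : ℕ} [NeZero (ℓ ^ k)] {D : ZMod (ℓ ^ k)}
    (hv : vval ℓ k D = 2 * t + 1) (ht : 2 * t + 1 < k) :
    ∃ u : ℕ, ¬ ℓ ∣ u ∧ D = ℓ ^ (2 * t) * (ℓ * u : ℕ) := by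
  obtain ⟨u, hu, rfl⟩ := exists_eq_pow_mul_of_vval_lt hv ht
  exact ⟨u, hu, by rw [Nat.cast_mul, pow_succ, mul_assoc]⟩

lemma isSquare_natCast_zmod_iff {n a : ℕ} [NeZero n] :
    IsSquare (a : ZMod n) ↔ ∃ b : ℕ, a ≡ b ^ 2 [MOD n] := by
  simp only [isSquare_iff_exists_sq, (ZMod.natCast_zmod_surjective (n := n)).exists,
    ← Nat.cast_pow, ZMod.natCast_eq_natCast_iff]

lemma isSquare_pow_two_mul_mul_iff {ℓ : ℕ} [NeZero ℓ] (k t u : ℕ) :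
    IsSquare (ℓ ^ (2 * t) * u : ZMod (ℓ ^ (k + 2 * t))) ↔ IsSquare (u : ZMod (ℓ ^ k)) := by
  have hcancel (z : ℕ) : ℓ ^ (2 * t) * u ≡ (ℓ ^ t * z) ^ 2 [MOD ℓ ^ (k + 2 * t)] ↔
      u ≡ z ^ 2 [MOD ℓ ^ k] := by
    rw [show (ℓ ^ t * z) ^ 2 = ℓ ^ (2 * t) * z ^ 2 by ring, add_comm, pow_add]
    exact Nat.ModEq.mul_left_cancel_iff' (pow_ne_zero _ (NeZero.ne ℓ))
  rw [← Nat.cast_pow, ← Nat.cast_mul, isSquare_natCast_zmod_iff, isSquare_natCast_zmod_iff]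
  refine ⟨?_, fun ⟨z, hz⟩ ↦ ⟨ℓ ^ t * z, (hcancel z).2 hz⟩⟩
  rintro ⟨y, hy⟩
  have hdvd : (ℓ ^ t) ^ 2 ∣ y ^ 2 := by
    rw [← pow_mul, mul_comm t]
    exact (hy.dvd_iff (pow_dvd_pow ℓ (Nat.le_add_left _ _))).1 (dvd_mul_right _ _)
  obtain ⟨z, rfl⟩ := (Nat.pow_dvd_pow_iff two_ne_zero).1 hdvd
  exact ⟨z, (hcancel z).1 hy⟩

end Valuation

section ClosedForms

lemma ncard_tracelessSqrts_of_subsingleton {R : Type*} [CommRing R] [Subsingleton R] (D : R) :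
    (tracelessSqrts D).ncard = 1 := by
  rw [show tracelessSqrts D = {0} from Set.eq_singleton_iff_unique_mem.2
    ⟨Subsingleton.elim _ _, fun _ _ ↦ Subsingleton.elim _ _⟩, Set.ncard_singleton]

lemma eq_sub_mul_of_mul_add_eq {ℓ M a b c : ℕ} (hℓ : 0 < ℓ)
    (h : ℓ * M + ℓ * (b * c) = ℓ * (a * c)) : M = (a - b) * c := by
  rw [← mul_add] at h
  rw [Nat.sub_mul, ← Nat.eq_of_mul_eq_mul_left hℓ h, Nat.add_sub_cancel]

variable {ℓ : ℕ} [hℓ : Fact ℓ.Prime] {k t : ℕ} {D : ZMod (ℓ ^ k)}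

lemma ncard_tracelessSqrts_of_even_vval_of_not_isSquare (h2 : ℓ ≠ 2) (hv : vval ℓ k D = 2 * t)
    (ht : 2 * t < k) (hsq : ¬ IsSquare D) :
    (tracelessSqrts D).ncard = (ℓ ^ (t + 1) + ℓ ^ t - 2) * ℓ ^ (2 * k - t - 1) := by
  obtain ⟨n, rfl⟩ : ∃ n, k = n + 1 + 2 * t := ⟨k - 2 * t - 1, by omega⟩
  obtain ⟨u, hu, rfl⟩ := exists_eq_pow_mul_of_vval_lt hv ht
  rw [isSquare_pow_two_mul_mul_iff] at hsq
  have hunit : IsUnit (u : ZMod (ℓ ^ (n + 1))) := by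
    rwa [ZMod.isUnit_natCast_iff_not_dvd_pow hℓ.out n.succ_pos]
  have hbase := ncard_tracelessSqrts_of_not_isSquare (isUnit_two_zmod_prime_pow h2) hunit hsq
  simp only [Nat.card_zmod, card_maximalIdeal_zmod_prime_pow] at hbase
  have hiter := ncard_tracelessSqrts_descent_iterate (ℓ := ℓ) (k := n + 1) t u
  rw [show 2 * (n + 1 + 2 * t) - t - 1 = 2 * n + 3 * t + 1 by omega]
  refine eq_sub_mul_of_mul_add_eq hℓ.out.pos ?_
  linear_combination hiter + ℓ ^ (3 * t + 1) * hbase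

lemma ncard_tracelessSqrts_of_even_vval_of_isSquare (h2 : ℓ ≠ 2) (hv : vval ℓ k D = 2 * t)
    (ht : 2 * t < k) (hsq : IsSquare D) :
    (tracelessSqrts D).ncard = (ℓ + 1) * ℓ ^ (2 * k - 1) := by
  obtain ⟨n, rfl⟩ : ∃ n, k = n + 1 + 2 * t := ⟨k - 2 * t - 1, by omega⟩
  obtain ⟨u, hu, rfl⟩ := exists_eq_pow_mul_of_vval_lt hv ht
  rw [isSquare_pow_two_mul_mul_iff] at hsq
  have hunit : IsUnit (u : ZMod (ℓ ^ (n + 1))) := by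
    rwa [ZMod.isUnit_natCast_iff_not_dvd_pow hℓ.out n.succ_pos]
  have hbase := ncard_tracelessSqrts_of_isSquare (isUnit_two_zmod_prime_pow h2) hunit hsq
  simp only [Nat.card_zmod, card_maximalIdeal_zmod_prime_pow] at hbase
  have hiter := ncard_tracelessSqrts_descent_iterate (ℓ := ℓ) (k := n + 1) t u
  rw [show 2 * (n + 1 + 2 * t) - 1 = 2 * n + 4 * t + 1 by omega]
  refine Nat.eq_of_mul_eq_mul_left hℓ.out.pos ?_
  linear_combination hiter + ℓ ^ (3 * t + 1) * hbase

lemma ncard_tracelessSqrts_of_odd_vval (ht : 1 ≤ t) (hv : vval ℓ k D = 2 * t - 1)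
    (htk : 2 * t - 1 < k) :
    (tracelessSqrts D).ncard = (ℓ ^ (t + 1) + ℓ ^ t - ℓ - 1) * ℓ ^ (2 * k - t - 1) := by
  obtain ⟨s, rfl⟩ : ∃ s, t = s + 1 := ⟨t - 1, by omega⟩
  obtain ⟨n, rfl⟩ : ∃ n, k = n + 2 + 2 * s := ⟨k - 2 * s - 2, by omega⟩
  obtain ⟨u, hu, rfl⟩ := exists_eq_pow_two_mul_mul_of_vval_lt hv htk
  have hbase := ncard_tracelessSqrts_add_of_notMem_sq (natCast_mul_mem_maximalIdeal u)
    (natCast_mul_notMem_maximalIdeal_sq (k := n) hu)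
  simp only [Nat.card_zmod, card_maximalIdeal_zmod_prime_pow] at hbase
  have hiter := ncard_tracelessSqrts_descent_iterate (ℓ := ℓ) (k := n + 2) s (ℓ * u)
  rw [Nat.sub_sub (ℓ ^ _ + ℓ ^ _),
    show 2 * (n + 2 + 2 * s) - (s + 1) - 1 = 2 * n + 3 * s + 2 by omega]
  refine eq_sub_mul_of_mul_add_eq hℓ.out.pos ?_
  linear_combination hiter + ℓ ^ (3 * s + 1) * hbase

lemma not_isSquare_of_odd_vval (hodd : Odd (vval ℓ k D)) (hlt : vval ℓ k D < k) :
    ¬ IsSquare D := by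
  obtain ⟨t, hv⟩ := hodd
  obtain ⟨n, rfl⟩ : ∃ n, k = n + 2 + 2 * t := ⟨k - 2 * t - 2, by omega⟩
  obtain ⟨u, hu, rfl⟩ := exists_eq_pow_two_mul_mul_of_vval_lt hv (hv ▸ hlt)
  rw [isSquare_pow_two_mul_mul_iff]
  exact not_isSquare_of_notMem_sq (natCast_mul_mem_maximalIdeal u)
    (natCast_mul_notMem_maximalIdeal_sq hu)

lemma ncard_tracelessSqrts_zero_even {m : ℕ} (hm : 1 ≤ m) :
    (tracelessSqrts (0 : ZMod (ℓ ^ (2 * m)))).ncard =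
      (ℓ ^ (m + 1) + ℓ ^ m - 1) * ℓ ^ (3 * m - 1) := by
  have hbase : (tracelessSqrts ((0 : ℕ) : ZMod (ℓ ^ 0))).ncard = 1 :=
    ncard_tracelessSqrts_of_subsingleton (R := ZMod 1) _
  have hiter := ncard_tracelessSqrts_descent_iterate (ℓ := ℓ) (k := 0) m 0
  rw [hbase, zero_add, Nat.cast_zero, mul_zero] at hiter
  refine eq_sub_mul_of_mul_add_eq hℓ.out.pos ?_
  obtain ⟨s, hs⟩ : ∃ s, 3 * m = s + 1 := ⟨3 * m - 1, by omega⟩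
  rw [show 4 * m = s + 1 + m by omega, hs] at hiter
  rw [hs, Nat.add_sub_cancel]
  linear_combination hiter

lemma ncard_tracelessSqrts_zero_odd (m : ℕ) :
    (tracelessSqrts (0 : ZMod (ℓ ^ (2 * m + 1)))).ncard =
      (ℓ ^ (m + 1) + ℓ ^ m - 1) * ℓ ^ (3 * m + 1) := by
  have hbase : (tracelessSqrts ((0 : ℕ) : ZMod (ℓ ^ 1))).ncard = ℓ ^ 2 := by
    rw [pow_one, Nat.cast_zero, ncard_tracelessSqrts_zero_of_field, Nat.card_zmod]
  have hiter := ncard_tracelessSqrts_descent_iterate (ℓ := ℓ) (k := 1) m 0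
  rw [hbase, Nat.cast_zero, mul_zero, add_comm 1] at hiter
  refine eq_sub_mul_of_mul_add_eq hℓ.out.pos ?_
  linear_combination hiter

end ClosedForms

/-- The count `N(f)` of matrices in `GL₂(ℤ/ℓᵏℤ)` with characteristic polynomial
`f = X² − TX + S` (`S` a unit), in terms of `i = v(D)` and whether `D = T² − 4S`
is a square; in particular `N(f)` depends only on this data. -/
theorem stmt_12 (ℓ k : ℕ) (hℓ : ℓ.Prime) (hodd : ℓ ≠ 2) (hk : 1 ≤ k)
    (T S : ZMod (ℓ ^ k)) (hS : IsUnit S) :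
    (vval ℓ k (T ^ 2 - 4 * S) = 0 → ¬ IsSquare (T ^ 2 - 4 * S) →
      Ncount ℓ k T S = (ℓ - 1) * ℓ ^ (2 * k - 1)) ∧
    (vval ℓ k (T ^ 2 - 4 * S) = 0 → IsSquare (T ^ 2 - 4 * S) →
      Ncount ℓ k T S = (ℓ + 1) * ℓ ^ (2 * k - 1)) ∧
    (∀ t : ℕ, 1 ≤ t → vval ℓ k (T ^ 2 - 4 * S) = 2 * t - 1 → 2 * t - 1 < k →
      ¬ IsSquare (T ^ 2 - 4 * S) →
      Ncount ℓ k T S = (ℓ ^ (t + 1) + ℓ ^ t - ℓ - 1) * ℓ ^ (2 * k - t - 1)) ∧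
    (∀ t : ℕ, 0 < t → vval ℓ k (T ^ 2 - 4 * S) = 2 * t → 2 * t < k →
      ¬ IsSquare (T ^ 2 - 4 * S) →
      Ncount ℓ k T S = (ℓ ^ (t + 1) + ℓ ^ t - 2) * ℓ ^ (2 * k - t - 1)) ∧
    (∀ t : ℕ, 0 < t → vval ℓ k (T ^ 2 - 4 * S) = 2 * t → 2 * t < k →
      IsSquare (T ^ 2 - 4 * S) →
      Ncount ℓ k T S = (ℓ + 1) * ℓ ^ (2 * k - 1)) ∧
    (∀ m : ℕ, vval ℓ k (T ^ 2 - 4 * S) = k → k = 2 * m →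
      Ncount ℓ k T S = (ℓ ^ (m + 1) + ℓ ^ m - 1) * ℓ ^ (3 * m - 1)) ∧
    (∀ m : ℕ, vval ℓ k (T ^ 2 - 4 * S) = k → k = 2 * m + 1 →
      Ncount ℓ k T S = (ℓ ^ (m + 1) + ℓ ^ m - 1) * ℓ ^ (3 * m + 1)) ∧
    (Odd (vval ℓ k (T ^ 2 - 4 * S)) → vval ℓ k (T ^ 2 - 4 * S) < k →
      IsSquare (T ^ 2 - 4 * S) → Ncount ℓ k T S = 0) ∧
    (vval ℓ k (T ^ 2 - 4 * S) = k → ¬ IsSquare (T ^ 2 - 4 * S) →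
      Ncount ℓ k T S = 0) := by
  have : Fact ℓ.Prime := ⟨hℓ⟩
  have : NeZero k := NeZero.of_pos hk
  have hcount : Ncount ℓ k T S = (tracelessSqrts (T ^ 2 - 4 * S)).ncard :=
    card_GL_charpoly_eq (isUnit_two_zmod_prime_pow hodd) T hS
  rw [hcount]
  generalize T ^ 2 - 4 * S = D
  refine ⟨fun hv hsq ↦ ?_, fun hv hsq ↦ ?_, fun t ht hv htk _ ↦ ?_, fun t _ hv htk hsq ↦ ?_,
    fun t _ hv htk hsq ↦ ?_, fun m hv hkm ↦ ?_, fun m hv hkm ↦ ?_, fun hodd_v hvk hsq ↦ ?_,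
    fun hv hsq ↦ ?_⟩
  · simpa using ncard_tracelessSqrts_of_even_vval_of_not_isSquare (t := 0) hodd hv hk hsq
  · exact ncard_tracelessSqrts_of_even_vval_of_isSquare (t := 0) hodd hv hk hsq
  · exact ncard_tracelessSqrts_of_odd_vval ht hv htk
  · exact ncard_tracelessSqrts_of_even_vval_of_not_isSquare hodd hv htk hsq
  · exact ncard_tracelessSqrts_of_even_vval_of_isSquare hodd hv htk hsq
  · subst hkm
    rw [eq_zero_of_vval_eq hv, ncard_tracelessSqrts_zero_even (by omega)]
  · subst hkm
    rw [eq_zero_of_vval_eq hv, ncard_tracelessSqrts_zero_odd]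
  · exact absurd hsq (not_isSquare_of_odd_vval hodd_v hvk)
  · exact absurd (eq_zero_of_vval_eq hv ▸ IsSquare.zero) hsq
end

section
/- As x → ∞, the sum over primes p ≤ x of 1/√p is asymptotically equivalent to 2√x / log x; that is, (Σ_{p ≤ x, p prime} 1/√p) · (log x)/(2√x) → 1 as x → ∞. -/
/-!
The prime number theorem `θ(x) ∼ x` is obtained by the Wiener–Ikehara method. The function
`b(u) = e⁻ᵘ ψ(eᵘ) - 1` has a Laplace transform that extends continuously to the closed right
half-plane, because `-(ζ' / ζ)(s) - 1 / (s - 1)` extends continuously to `Re s ≥ 1`. Pairing `b`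
with a translate of a nonnegative kernel `K` whose Fourier transform has compact support gives the
Fourier transform of a continuous compactly supported function, so by the Riemann–Lebesgue lemma
`∫ b(u) K(u - y) du → 0`. Hence far out every window of fixed length contains points where `b` is
not much above `0`, and points where it is not much below; since `ψ` is monotone, `b` cannot drop
quickly, and therefore `b → 0`.

Summing by parts, `∑_{p ≤ x} p^(-α) log p ∼ x^(1-α) / (1-α)` for every `α < 1`. To remove the
weight `log p`, note that the primes `p ≤ x^η` with `η < 1` contribute a negligible amount, while
`η log x ≤ log p ≤ log x` for the others; then let `η → 1`.
-/

open Filter Real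

section FourierKernel

open MeasureTheory Topology Set FourierTransform ContDiff

variable {E : Type*} [NormedAddCommGroup E] [NormedSpace ℂ E]

lemma integral_fourier_smul_eq_flip {f : ℝ → ℂ} {k : ℝ → E} [CompleteSpace E]
    (hf : Integrable f) (hk : Integrable k) :
    ∫ ξ, 𝓕 f ξ • k ξ = ∫ x, f x • 𝓕 k x := by
  simpa using! VectorFourier.integral_fourierIntegral_smul_eq_flip (L := innerₗ ℝ)
    continuous_fourierChar continuous_inner hf hk

lemma fourier_fourierChar_smul (k : ℝ → E) (y u : ℝ) :
    𝓕 (fun t ↦ 𝐞 (t * y) • k t) u = 𝓕 k (u - y) := by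
  simp only [fourier_real_eq, smul_smul, ← AddChar.map_add_eq_mul]
  congr! 4
  ring

lemma fourier_comp_inv_mul (k : ℝ → E) {c : ℝ} (hc : 0 < c) (v : ℝ) :
    𝓕 (fun t ↦ k (c⁻¹ * t)) v = c • 𝓕 k (c * v) := by
  have h := Measure.integral_comp_inv_mul_left (fun t ↦ 𝐞 (-(t * (c * v))) • k t) c
  rw [abs_of_pos hc] at h
  rw [fourier_real_eq, fourier_real_eq, ← h]
  congr! 4
  field_simp

lemma im_fourier_eq_zero_of_even {φ : ℝ → ℝ} (hφ : Function.Even φ) (v : ℝ) :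
    (𝓕 (fun t ↦ (φ t : ℂ)) v).im = 0 := by
  rw [← Complex.conj_eq_iff_im, fourier_real_eq, ← integral_conj, ← integral_neg_eq_self]
  congr with t
  simp [Circle.smul_def, hφ t, ← Circle.coe_inv_eq_conj, AddChar.map_neg_eq_inv]

/-- A Fejér-type kernel: the nonnegative integrable function `K` is the Fourier transform of the
continuous compactly supported function `k`. Integrals against `K` are averages that only see a
bounded range of frequencies. -/
structure IsFejerKernel (k : ℝ → ℂ) (K : ℝ → ℝ) : Prop where
  continuous : Continuous k
  hasCompactSupport : HasCompactSupport k
  fourier_eq : 𝓕 k = fun v ↦ (K v : ℂ)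
  nonneg : ∀ v, 0 ≤ K v
  integrable : Integrable K
  integral_pos : 0 < ∫ v, K v

-- `𝓕 (φ ⋆ φ) = (𝓕 φ)²`, and `𝓕 φ` is real because the bump `φ` is even.
lemma exists_isFejerKernel : ∃ k K, IsFejerKernel k K := by
  let φ : ContDiffBump (0 : ℝ) := default
  let f : ℝ → ℂ := fun t ↦ φ t
  have hf_smooth : ContDiff ℝ ∞ f := Complex.ofRealCLM.contDiff.comp φ.contDiff
  have hf_supp : HasCompactSupport f :=
    φ.hasCompactSupport.comp_left (g := ((↑) : ℝ → ℂ)) Complex.ofReal_zero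
  have hf_int : Integrable f := hf_smooth.continuous.integrable_of_hasCompactSupport hf_supp
  obtain ⟨F, hF⟩ : ∃ F : SchwartzMap ℝ ℂ, ⇑F = 𝓕 f :=
    ⟨𝓕 (hf_supp.toSchwartzMap hf_smooth), by rw [SchwartzMap.fourier_coe]; rfl⟩
  have hF_real (v : ℝ) : F v = (F v).re := by
    refine Complex.ext rfl ?_
    rw [hF, im_fourier_eq_zero_of_even (fun t ↦ φ.neg t), Complex.ofReal_im]
  have hK_int : Integrable fun v ↦ (F v).re ^ 2 :=
    (F.memLp 2).re.integrable_sq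
  refine ⟨convolution f f (ContinuousLinearMap.mul ℂ ℂ) volume, fun v ↦ (F v).re ^ 2,
    hf_supp.continuous_convolution_right _ hf_int.locallyIntegrable hf_smooth.continuous,
    hf_supp.convolution _ hf_supp, ?_, fun v ↦ sq_nonneg _, hK_int, ?_⟩
  · ext v
    rw [Real.fourier_mul_convolution_eq hf_int hf_int, ← hF, hF_real v]
    simp [sq]
  · have hF_zero : F 0 = (∫ t, φ t : ℝ) := by
      rw [hF, fourier_real_eq, ← integral_complex_ofReal]
      simp [f]
    refine integral_pos_of_integrable_nonneg_nonzero (x := 0) (by fun_prop) hK_int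
      (fun v ↦ sq_nonneg _) ?_
    rw [hF_zero, Complex.ofReal_re]
    exact pow_ne_zero 2 φ.integral_pos.ne'

lemma IsFejerKernel.dilate {k : ℝ → ℂ} {K : ℝ → ℝ} (h : IsFejerKernel k K) {c : ℝ} (hc : 0 < c) :
    IsFejerKernel (fun t ↦ k (c⁻¹ * t)) (fun v ↦ c * K (c * v)) where
  continuous := h.continuous.comp (continuous_const_mul _)
  hasCompactSupport := h.hasCompactSupport.comp_homeomorph (Homeomorph.mulLeft₀ c⁻¹ (by positivity))
  fourier_eq := by
    ext v
    simp [fourier_comp_inv_mul k hc, h.fourier_eq]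
  nonneg v := mul_nonneg hc.le (h.nonneg _)
  integrable := (h.integrable.comp_mul_left' hc.ne').const_mul c
  integral_pos := by
    rw [integral_const_mul, Measure.integral_comp_mul_left, smul_eq_mul]
    have := h.integral_pos
    positivity

lemma exists_isFejerKernel_concentrated {δ η : ℝ} (hδ : 0 < δ) (hη : η < 1) :
    ∃ k K, IsFejerKernel k K ∧ η * ∫ v, K v < ∫ v in -δ..δ, K v := by
  obtain ⟨k, K, h⟩ := exists_isFejerKernel
  have hlim : Tendsto (fun c ↦ ∫ v in c * -δ..c * δ, K v) atTop (𝓝 (∫ v, K v)) :=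
    intervalIntegral_tendsto_integral h.integrable
      (tendsto_id.atTop_mul_const_of_neg (neg_neg_of_pos hδ)) (tendsto_id.atTop_mul_const hδ)
  have hlt : η * ∫ v, K v < ∫ v, K v := mul_lt_of_lt_one_left h.integral_pos hη
  obtain ⟨c, hcK, hc⟩ := ((hlim.eventually_const_lt hlt).and (eventually_gt_atTop 0)).exists
  refine ⟨_, _, h.dilate hc, ?_⟩
  rw [integral_const_mul, Measure.integral_comp_mul_left, abs_of_pos (inv_pos.mpr hc), smul_eq_mul,
    mul_inv_cancel_left₀ hc.ne', intervalIntegral.integral_const_mul,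
    intervalIntegral.integral_comp_mul_left _ hc.ne', smul_eq_mul, mul_inv_cancel_left₀ hc.ne']
  exact hcK

end FourierKernel

section LaplaceTransform

open MeasureTheory Topology Set FourierTransform

/-- The one-sided Laplace transform `∫₀^∞ e^{-zu} b(u) du`; it is `0` where the integral does not
converge absolutely. -/
noncomputable def laplaceTransform (b : ℝ → ℂ) (z : ℂ) : ℂ :=
  ∫ u in Ioi (0 : ℝ), Complex.exp (-z * u) * b u

variable {b k : ℝ → ℂ} {M : ℝ}

lemma integrableOn_exp_mul_of_bounded (hb : Measurable b) (hbM : ∀ u, ‖b u‖ ≤ M) {z : ℂ}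
    (hz : 0 < z.re) : IntegrableOn (fun u : ℝ ↦ Complex.exp (-z * u) * b u) (Ioi 0) :=
  (integrableOn_exp_mul_complex_Ioi (by simpa using hz) 0).mul_bdd
    hb.aestronglyMeasurable (ae_of_all _ hbM)

lemma fourier_indicator_exp_mul (b : ℝ → ℂ) (z : ℂ) (t : ℝ) :
    𝓕 ((Ioi 0).indicator fun u : ℝ ↦ Complex.exp (-z * u) * b u) t =
      laplaceTransform b (z + 2 * π * t * Complex.I) := by
  rw [fourier_real_eq, laplaceTransform, ← integral_indicator measurableSet_Ioi]
  congr with u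
  by_cases hu : u ∈ Ioi (0 : ℝ)
  · simp only [indicator_of_mem hu, Circle.smul_def, fourierChar_apply, smul_eq_mul, ← mul_assoc,
      ← Complex.exp_add]
    congr 2
    push_cast
    ring
  · simp [indicator_of_notMem hu]

lemma laplaceTransform_mul_fourier (hb : Measurable b) (hbM : ∀ u, ‖b u‖ ≤ M)
    (hk : Integrable k) {z : ℂ} (hz : 0 < z.re) :
    laplaceTransform (fun u ↦ b u * 𝓕 k u) z =
      ∫ t : ℝ, laplaceTransform b (z + 2 * π * t * Complex.I) * k t := by
  have h := integral_fourier_smul_eq_flip ((integrable_indicator_iff measurableSet_Ioi).mpr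
    (integrableOn_exp_mul_of_bounded hb hbM hz)) hk
  simp only [fourier_indicator_exp_mul, smul_eq_mul] at h
  rw [h, laplaceTransform, ← integral_indicator measurableSet_Ioi]
  simp only [← mul_assoc, indicator_mul_left]

lemma tendsto_laplaceTransform_nhdsGT_zero {f : ℝ → ℂ} (hf : IntegrableOn f (Ioi 0)) :
    Tendsto (fun ε : ℝ ↦ laplaceTransform f ε) (𝓝[>] 0) (𝓝 (∫ u in Ioi (0 : ℝ), f u)) := by
  refine tendsto_integral_filter_of_dominated_convergence (fun u ↦ ‖f u‖) ?_ ?_ hf.norm ?_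
  · exact .of_forall fun ε ↦ (by fun_prop : Continuous fun u : ℝ ↦
      Complex.exp (-ε * u)).aestronglyMeasurable.mul hf.aestronglyMeasurable
  · filter_upwards [self_mem_nhdsWithin] with ε (hε : 0 < ε)
    filter_upwards [ae_restrict_mem measurableSet_Ioi] with u (hu : 0 < u)
    rw [norm_mul, Complex.norm_exp]
    refine mul_le_of_le_one_left (norm_nonneg _) (Real.exp_le_one_iff.mpr ?_)
    simpa using (mul_pos hε hu).le
  · refine ae_of_all _ fun u ↦ ?_
    have : ContinuousAt (fun ε : ℝ ↦ Complex.exp (-ε * u) * f u) 0 := by fun_prop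
    simpa using this.tendsto.mono_left nhdsWithin_le_nhds

lemma integral_mul_fourier_eq_of_laplaceTransform_eqOn (hb : Measurable b) (hbM : ∀ u, ‖b u‖ ≤ M)
    {g : ℂ → ℂ} (hg : ContinuousOn g {z | 0 ≤ z.re})
    (hbg : EqOn (laplaceTransform b) g {z | 0 < z.re})
    (hk : Continuous k) (hk_supp : HasCompactSupport k) (hk_fourier : Integrable (𝓕 k)) :
    ∫ u in Ioi (0 : ℝ), b u * 𝓕 k u = ∫ t : ℝ, g (2 * π * t * Complex.I) * k t := by
  have hleft := tendsto_laplaceTransform_nhdsGT_zero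
    (hk_fourier.bdd_mul hb.aestronglyMeasurable (ae_of_all _ hbM)).integrableOn
  have hright : Tendsto (fun ε : ℝ ↦ ∫ t : ℝ, g (ε + 2 * π * t * Complex.I) * k t)
      (𝓝[>] 0) (𝓝 (∫ t : ℝ, g (2 * π * t * Complex.I) * k t)) := by
    have hcont : ContinuousOn (fun ε : ℝ ↦ ∫ t : ℝ, g (ε + 2 * π * t * Complex.I) * k t)
        (Ici 0) := by
      refine continuousOn_integral_of_compact_support hk_supp
        ((hg.comp (by fun_prop) ?_).mul (by fun_prop)) fun ε t _ ht ↦ ?_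
      · rintro ⟨ε, t⟩ hε
        simpa using hε
      · rw [image_eq_zero_of_notMem_tsupport ht, mul_zero]
    simpa using (hcont 0 self_mem_Ici).mono_left (nhdsWithin_mono 0 Ioi_subset_Ici_self)
  refine tendsto_nhds_unique (hleft.congr' ?_) hright
  filter_upwards [self_mem_nhdsWithin] with ε (hε : 0 < ε)
  rw [laplaceTransform_mul_fourier hb hbM (hk.integrable_of_hasCompactSupport hk_supp)
    (by simpa using hε)]
  congr with t
  rw [hbg (by simpa using hε)]

/-- The Laplace transform of `b`, thought of as given on `Re z > 0`, extends continuously to the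
closed half-plane `Re z ≥ 0`. This is the analytic hypothesis of the Tauberian theorem. -/
def HasContinuousLaplaceExtension (b : ℝ → ℂ) : Prop :=
  ∃ g : ℂ → ℂ, ContinuousOn g {z | 0 ≤ z.re} ∧ EqOn (laplaceTransform b) g {z | 0 < z.re}

lemma HasContinuousLaplaceExtension.neg (h : HasContinuousLaplaceExtension b) :
    HasContinuousLaplaceExtension fun u ↦ -b u := by
  obtain ⟨g, hg, hbg⟩ := h
  refine ⟨-g, hg.neg, fun z hz ↦ ?_⟩
  simp only [laplaceTransform, mul_neg, integral_neg, Pi.neg_apply, ← hbg hz]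

lemma HasContinuousLaplaceExtension.tendsto_integral_mul_fourier_sub
    (h : HasContinuousLaplaceExtension b) (hb : Measurable b) (hbM : ∀ u, ‖b u‖ ≤ M)
    (hk : Continuous k) (hk_supp : HasCompactSupport k) (hk_fourier : Integrable (𝓕 k)) :
    Tendsto (fun y ↦ ∫ u in Ioi (0 : ℝ), b u * 𝓕 k (u - y)) atTop (𝓝 0) := by
  obtain ⟨g, hg, hbg⟩ := h
  have hlim := (Real.zero_at_infty_fourier fun t : ℝ ↦ g (2 * π * t * Complex.I) * k t).comp
    (tendsto_neg_atTop_atBot.mono_right atBot_le_cocompact)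
  refine hlim.congr fun y ↦ ?_
  have hmod := integral_mul_fourier_eq_of_laplaceTransform_eqOn hb hbM hg hbg
    (k := fun t ↦ 𝐞 (t * y) • k t) (by fun_prop) (hk_supp.smul_left (f := fun t ↦ 𝐞 (t * y)))
    (by simpa [funext (fourier_fourierChar_smul k y)] using hk_fourier.comp_sub_right y)
  simp only [fourier_fourierChar_smul] at hmod
  rw [hmod, Function.comp_apply, fourier_real_eq]
  congr with t
  rw [mul_neg, neg_neg, mul_smul_comm]

end LaplaceTransform

section Tauberian

open MeasureTheory Topology Set FourierTransform

/-- `f` is slowly decreasing at `∞` (R. Schmidt's condition, in additive form): up to an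
arbitrarily small error it does not decrease on short enough intervals far out. This is the
Tauberian condition that turns averages into values. -/
def SlowlyDecreasing (f : ℝ → ℝ) : Prop :=
  ∀ ε > 0, ∃ δ > 0, ∀ᶠ x in atTop, ∀ y ∈ Icc x (x + δ), f x - ε ≤ f y

variable {b K : ℝ → ℝ} {M δ ε : ℝ}

lemma eventually_exists_lt_of_tendsto_integral_mul (hb : Measurable b) (hbM : ∀ u, |b u| ≤ M)
    (hK : Integrable K) (hK0 : ∀ v, 0 ≤ K v)
    (hlim : Tendsto (fun y ↦ ∫ u in Ioi (0 : ℝ), b u * K (u - y)) atTop (𝓝 0))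
    (hKδ : M * ∫ v, K v < (ε + M) * ∫ v in -δ..δ, K v) (hδ : 0 < δ) :
    ∀ᶠ y in atTop, ∃ u ∈ Icc (y - δ) (y + δ), b u < ε := by
  filter_upwards [hlim.eventually_lt_const (sub_pos.mpr hKδ), eventually_gt_atTop δ] with y hy hyδ
  by_contra! hbε
  have hKy : Integrable fun u ↦ K (u - y) := hK.comp_sub_right y
  have hbK : Integrable fun u ↦ b u * K (u - y) :=
    hKy.bdd_mul hb.aestronglyMeasurable (ae_of_all _ hbM)
  have hnonneg (u : ℝ) : 0 ≤ (b u + M) * K (u - y) :=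
    mul_nonneg (by linarith [(abs_le.mp (hbM u)).1]) (hK0 _)
  have hsum : Integrable fun u ↦ (b u + M) * K (u - y) := by
    simpa only [add_mul] using! hbK.add (hKy.const_mul M)
  -- `b + M` is nonnegative, so its weighted integral is at least the part over the window.
  have hM : 0 ≤ M := (abs_nonneg _).trans (hbM 0)
  have hlower : (ε + M) * ∫ v in -δ..δ, K v ≤ ∫ u in Ioi (0 : ℝ), (b u + M) * K (u - y) := calc
    _ = ∫ u in Ioc (y - δ) (y + δ), (ε + M) * K (u - y) := by
        rw [integral_const_mul, ← intervalIntegral.integral_of_le (by linarith),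
          intervalIntegral.integral_comp_sub_right]
        ring_nf
    _ ≤ ∫ u in Ioc (y - δ) (y + δ), (b u + M) * K (u - y) := by
        refine setIntegral_mono_on (hKy.const_mul _).integrableOn hsum.integrableOn
          measurableSet_Ioc fun u hu ↦ ?_
        gcongr
        · exact hK0 _
        · exact hbε u (Ioc_subset_Icc_self hu)
    _ ≤ _ := setIntegral_mono_set hsum.integrableOn (ae_of_all _ hnonneg)
        (Ioc_subset_Ioi_self.trans (Ioi_subset_Ioi (by linarith))).eventuallyLE
  have hupper : ∫ u in Ioi (0 : ℝ), (b u + M) * K (u - y) ≤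
      (∫ u in Ioi (0 : ℝ), b u * K (u - y)) + M * ∫ v, K v := by
    simp only [add_mul]
    rw [integral_add hbK.integrableOn (hKy.const_mul M).integrableOn, integral_const_mul,
      ← integral_sub_right_eq_self K y]
    gcongr
    · exact ae_of_all _ fun u ↦ hK0 _
    · exact Measure.restrict_le_self
  linarith

lemma HasContinuousLaplaceExtension.eventually_exists_lt
    (h : HasContinuousLaplaceExtension fun u ↦ (b u : ℂ)) (hb : Measurable b)
    (hbM : ∀ u, |b u| ≤ M) (hδ : 0 < δ) (hε : 0 < ε) :
    ∀ᶠ x in atTop, ∃ u ∈ Icc x (x + δ), b u < ε := by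
  have hM : 0 ≤ M := (abs_nonneg _).trans (hbM 0)
  obtain ⟨k, K, hkK, hKδ⟩ := exists_isFejerKernel_concentrated (half_pos hδ)
    ((div_lt_one (by positivity)).mpr (lt_add_of_pos_left M hε))
  rw [div_mul_eq_mul_div, div_lt_iff₀' (by positivity)] at hKδ
  have hlim : Tendsto (fun y ↦ ∫ u in Ioi (0 : ℝ), b u * K (u - y)) atTop (𝓝 0) := by
    have := h.tendsto_integral_mul_fourier_sub (by fun_prop) (by simpa using hbM) hkK.continuous
      hkK.hasCompactSupport (hkK.fourier_eq ▸ hkK.integrable.ofReal)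
    simp only [hkK.fourier_eq, ← Complex.ofReal_mul, integral_complex_ofReal] at this
    simpa only [Complex.ofReal_re] using! (Complex.continuous_re.tendsto 0).comp this
  have hshift : Tendsto (fun x ↦ x + δ / 2) atTop atTop :=
    tendsto_atTop_add_const_right _ _ tendsto_id
  filter_upwards [hshift.eventually <| eventually_exists_lt_of_tendsto_integral_mul hb hbM
    hkK.integrable hkK.nonneg hlim hKδ (half_pos hδ)] with x ⟨u, hu, hbu⟩
  exact ⟨u, ⟨by linarith [hu.1], by linarith [hu.2]⟩, hbu⟩

theorem SlowlyDecreasing.tendsto_zero_of_laplaceExtension (hb_slow : SlowlyDecreasing b)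
    (hb : Measurable b) (hbM : ∀ u, |b u| ≤ M)
    (h : HasContinuousLaplaceExtension fun u ↦ (b u : ℂ)) :
    Tendsto b atTop (𝓝 0) := by
  refine tendsto_order.mpr ⟨fun l hl ↦ ?_, fun l hl ↦ ?_⟩
  · obtain ⟨δ, hδ, hslow⟩ := hb_slow (-l / 2) (by linarith)
    have hneg : HasContinuousLaplaceExtension fun u ↦ ((-b u : ℝ) : ℂ) := by
      simpa only [Complex.ofReal_neg] using h.neg
    have hwindow := hneg.eventually_exists_lt hb.neg (by simpa using hbM) hδ
      (ε := -l / 2) (by linarith)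
    have hshift : Tendsto (fun x ↦ x - δ) atTop atTop :=
      tendsto_atTop_add_const_right _ (-δ) tendsto_id
    filter_upwards [hshift.eventually hwindow,
      hshift.eventually (eventually_forall_ge_atTop.mpr hslow)] with x ⟨u, hu, hbu⟩ hx
    have := hx u hu.1 x ⟨by linarith [hu.2], by linarith [hu.1]⟩
    linarith
  · obtain ⟨δ, hδ, hslow⟩ := hb_slow (l / 2) (by linarith)
    filter_upwards [hslow, h.eventually_exists_lt hb hbM hδ (half_pos hl)] with x hx ⟨u, hu, hbu⟩
    linarith [hx u hu]

lemma slowlyDecreasing_mul_exp_neg_sub {S : ℝ → ℝ} (hS : Monotone S)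
    (hS0 : ∀ u, 0 ≤ S u) (hSM : ∀ u, S u * exp (-u) ≤ M) (A : ℝ) :
    SlowlyDecreasing fun u ↦ S u * exp (-u) - A := by
  intro ε hε
  have hM : 0 ≤ M := (mul_nonneg (hS0 0) (exp_pos _).le).trans (hSM 0)
  refine ⟨ε / (M + 1), by positivity, .of_forall fun x y hy ↦ ?_⟩
  have hxy : 1 - exp (x - y) ≤ ε / (M + 1) := by linarith [add_one_le_exp (x - y), hy.2]
  have hmono : S x * exp (-x) * exp (x - y) ≤ S y * exp (-y) := by
    rw [mul_assoc, ← exp_add, neg_add_eq_sub, sub_sub_cancel_left]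
    gcongr
    exact hS hy.1
  have hdrop : S x * exp (-x) * (1 - exp (x - y)) ≤ ε := calc
    _ ≤ (M + 1) * (ε / (M + 1)) := mul_le_mul ((hSM x).trans (by linarith)) hxy
        (sub_nonneg.mpr (exp_le_one_iff.mpr (sub_nonpos.mpr hy.1))) (by positivity)
    _ = ε := by field_simp
  linarith

end Tauberian

section Summatory

/-- The summatory function `x ↦ ∑_{1 ≤ n ≤ x} a n` of an arithmetic function; `a 0` is not
counted. -/
noncomputable def summatory (a : ℕ → ℝ) (x : ℝ) : ℝ :=
  ∑ n ∈ Finset.Ioc 0 ⌊x⌋₊, a n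

lemma measurable_summatory (a : ℕ → ℝ) : Measurable (summatory a) :=
  (measurable_from_nat (f := fun N ↦ ∑ n ∈ Finset.Ioc 0 N, a n)).comp Nat.measurable_floor

variable {a : ℕ → ℝ}

lemma summatory_nonneg (ha : ∀ n, 0 ≤ a n) (x : ℝ) : 0 ≤ summatory a x :=
  Finset.sum_nonneg fun n _ ↦ ha n

lemma monotone_summatory (ha : ∀ n, 0 ≤ a n) : Monotone (summatory a) := fun _ _ hxy ↦
  Finset.sum_le_sum_of_subset_of_nonneg
    (Finset.Ioc_subset_Ioc_right (Nat.floor_mono hxy)) fun n _ _ ↦ ha n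

end Summatory

section WienerIkehara

open MeasureTheory Topology Set

lemma laplaceTransform_sub_const {b : ℝ → ℂ} {z : ℂ} (hz : 0 < z.re)
    (hb : IntegrableOn (fun u : ℝ ↦ Complex.exp (-z * u) * b u) (Ioi 0)) (A : ℂ) :
    laplaceTransform (fun u ↦ b u - A) z = laplaceTransform b z - A / z := by
  have hz' : (-z).re < 0 := by simpa using hz
  simp only [laplaceTransform, mul_sub]
  rw [integral_sub hb ((integrableOn_exp_mul_complex_Ioi hz' 0).mul_const A), integral_mul_const,
    integral_exp_mul_complex_Ioi hz']
  simp only [Complex.ofReal_zero, mul_zero, Complex.exp_zero, neg_div_neg_eq, one_div_mul_eq_div]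

/-- The summatory function `e⁻ᵘ ∑_{1 ≤ n ≤ eᵘ} a n` in the exponential variable, normalised by
its expected order of growth. -/
noncomputable def expSummatory (a : ℕ → ℝ) (u : ℝ) : ℝ :=
  summatory a (exp u) * exp (-u)

variable {a : ℕ → ℝ} {A C : ℝ}

lemma measurable_expSummatory (a : ℕ → ℝ) : Measurable (expSummatory a) :=
  ((measurable_summatory a).comp measurable_exp).mul (by fun_prop)

lemma expSummatory_nonneg (ha : ∀ n, 0 ≤ a n) (u : ℝ) : 0 ≤ expSummatory a u :=
  mul_nonneg (summatory_nonneg ha _) (exp_pos _).le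

lemma expSummatory_le (haC : ∀ x, 0 ≤ x → summatory a x ≤ C * x) (u : ℝ) :
    expSummatory a u ≤ C := by
  rw [expSummatory, exp_neg, ← div_eq_mul_inv, div_le_iff₀ (exp_pos u)]
  exact haC _ (exp_pos u).le

lemma LSeries_eq_mul_laplaceTransform_expSummatory (ha : ∀ n, 0 ≤ a n)
    (haC : ∀ x, 0 ≤ x → summatory a x ≤ C * x) {s : ℂ} (hs : 1 < s.re) :
    LSeries (fun n ↦ (a n : ℂ)) s =
      s * laplaceTransform (fun u ↦ (expSummatory a u : ℂ)) (s - 1) := by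
  have hIcc (n : ℕ) : Finset.Icc 1 n = Finset.Ioc 0 n := Finset.Icc_add_one_left_eq_Ioc 0 n
  have hO : (fun n ↦ ∑ k ∈ Finset.Icc 1 n, a k) =O[atTop] fun n : ℕ ↦ (n : ℝ) ^ (1 : ℝ) := by
    refine .of_bound C (.of_forall fun n ↦ ?_)
    simpa [abs_of_nonneg (Finset.sum_nonneg fun n _ ↦ ha n), summatory] using! haC n n.cast_nonneg
  rw [LSeries_eq_mul_integral_of_nonneg a zero_le_one hs hO ha, ← exp_zero,
    ← integral_comp_exp_Ioi, laplaceTransform]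
  congr 1
  refine setIntegral_congr_fun measurableSet_Ioi fun u _ ↦ ?_
  have hexp : Complex.exp u * (exp u : ℂ) ^ (-(s + 1)) =
      Complex.exp (-(s - 1) * u) * Complex.exp (-u) := by
    rw [Complex.cpow_def_of_ne_zero (Complex.ofReal_ne_zero.mpr (exp_pos u).ne'),
      ← Complex.ofReal_log (exp_pos u).le, log_exp, ← Complex.exp_add, ← Complex.exp_add]
    ring_nf
  simp only [expSummatory, summatory, hIcc, Complex.real_smul]
  push_cast at hexp ⊢
  linear_combination (∑ k ∈ Finset.Ioc 0 ⌊exp u⌋₊, (a k : ℂ)) * hexp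

lemma hasContinuousLaplaceExtension_expSummatory_sub (ha : ∀ n, 0 ≤ a n)
    (haC : ∀ x, 0 ≤ x → summatory a x ≤ C * x) {F : ℂ → ℂ}
    (hF : ContinuousOn F {s | 1 ≤ s.re})
    (hFL : EqOn F (fun s ↦ LSeries (fun n ↦ (a n : ℂ)) s - A / (s - 1)) {s | 1 < s.re}) :
    HasContinuousLaplaceExtension fun u ↦ ((expSummatory a u - A : ℝ) : ℂ) := by
  have hne {z : ℂ} (hz : 0 ≤ z.re) : z + 1 ≠ 0 := fun h ↦ by
    have := congrArg Complex.re h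
    simp only [Complex.add_re, Complex.one_re, Complex.zero_re] at this
    linarith
  -- With `s = z + 1`: `L(s) / s - A / (s - 1) = (L(s) - A / (s - 1) - A) / s`.
  refine ⟨fun z ↦ (F (z + 1) - A) / (z + 1), ?_, fun z (hz : 0 < z.re) ↦ ?_⟩
  · refine ((hF.comp (by fun_prop) fun z hz ↦ ?_).sub continuousOn_const).div (by fun_prop)
      fun z hz ↦ hne hz
    simpa using hz
  · have hz0 : z ≠ 0 := fun h ↦ by simp [h] at hz
    have hz1 : 1 < (z + 1).re := by simpa using hz
    have hint := integrableOn_exp_mul_of_bounded (b := fun u ↦ (expSummatory a u : ℂ)) (M := C)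
      (Complex.measurable_ofReal.comp (measurable_expSummatory a))
      (fun u ↦ by simpa [abs_of_nonneg (expSummatory_nonneg ha u)] using expSummatory_le haC u)
      hz
    have hL := LSeries_eq_mul_laplaceTransform_expSummatory ha haC hz1
    simp only [Complex.ofReal_sub]
    rw [laplaceTransform_sub_const hz hint, hFL hz1]
    beta_reduce
    rw [hL, add_sub_cancel_right]
    field_simp [hne hz.le]
    ring

/-- The Wiener–Ikehara theorem, under an a priori bound of Chebyshev type. -/
theorem tendsto_summatory_div_of_LSeries_sub_pole (ha : ∀ n, 0 ≤ a n)
    (haC : ∀ x, 0 ≤ x → summatory a x ≤ C * x) {F : ℂ → ℂ}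
    (hF : ContinuousOn F {s | 1 ≤ s.re})
    (hFL : EqOn F (fun s ↦ LSeries (fun n ↦ (a n : ℂ)) s - A / (s - 1)) {s | 1 < s.re}) :
    Tendsto (fun x : ℝ ↦ summatory a x / x) atTop (𝓝 A) := by
  have hbound (u : ℝ) : |expSummatory a u - A| ≤ C + |A| := by
    refine (abs_sub _ _).trans ?_
    rw [abs_of_nonneg (expSummatory_nonneg ha u)]
    gcongr
    exact expSummatory_le haC u
  have hslow : SlowlyDecreasing fun u ↦ expSummatory a u - A :=
    slowlyDecreasing_mul_exp_neg_sub ((monotone_summatory ha).comp exp_monotone)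
      (fun _ ↦ summatory_nonneg ha _) (expSummatory_le haC) A
  have hlim := hslow.tendsto_zero_of_laplaceExtension ((measurable_expSummatory a).sub_const A)
    hbound (hasContinuousLaplaceExtension_expSummatory_sub ha haC hF hFL)
  refine (tendsto_sub_nhds_zero_iff.mp (hlim.comp tendsto_log_atTop)).congr' ?_
  filter_upwards [eventually_gt_atTop 0] with x hx
  simp [expSummatory, exp_neg, exp_log hx, div_eq_mul_inv]

end WienerIkehara

section PrimeNumberTheorem

open Topology ArithmeticFunction

lemma residueClass_mod_one (a : ZMod 1) : vonMangoldt.residueClass a = fun n ↦ Λ n := by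
  ext n
  simp [vonMangoldt.residueClass, Set.indicator, Subsingleton.elim (n : ZMod 1) a]

lemma tendsto_psi_div_atTop : Tendsto (fun x ↦ Chebyshev.psi x / x) atTop (𝓝 1) := by
  have hpole := vonMangoldt.eqOn_LFunctionResidueClassAux (q := 1) isUnit_one
  simp only [residueClass_mod_one, Nat.totient_one, Nat.cast_one, inv_one] at hpole
  exact tendsto_summatory_div_of_LSeries_sub_pole (a := fun n ↦ Λ n) (fun _ ↦ vonMangoldt_nonneg)
    (fun _ ↦ Chebyshev.psi_le_const_mul_self)
    (vonMangoldt.continuousOn_LFunctionResidueClassAux (1 : ZMod 1)) (by simpa using hpole)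

lemma tendsto_theta_div_atTop : Tendsto (fun x ↦ Chebyshev.theta x / x) atTop (𝓝 1) := by
  have hsqrt : Real.sqrt =o[atTop] (id : ℝ → ℝ) := by
    refine Asymptotics.isLittleO_of_tendsto' ?_ ?_
    · filter_upwards [eventually_ne_atTop 0] with x hx h using absurd h hx
    · simpa only [id_eq, sqrt_div_self', one_div] using! tendsto_sqrt_atTop.inv_tendsto_atTop
  have := tendsto_psi_div_atTop.sub (Chebyshev.isBigO_psi_sub_theta_sqrt.trans_isLittleO
    hsqrt).tendsto_div_nhds_zero
  simpa [← sub_div] using this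

end PrimeNumberTheorem

section PartialSummation

open MeasureTheory Topology Set

variable {a c : ℕ → ℝ} {l α β B M : ℝ}

lemma summatory_of_lt_one (a : ℕ → ℝ) {x : ℝ} (hx : x < 1) : summatory a x = 0 := by
  rw [summatory, Nat.floor_eq_zero.mpr hx, Finset.Ioc_self, Finset.sum_empty]

lemma exists_abs_summatory_div_le (h : Tendsto (fun x ↦ summatory a x / x) atTop (𝓝 l)) :
    ∃ M, ∀ x, |summatory a x / x| ≤ M := by
  obtain ⟨M, hM⟩ := isBounded_iff_forall_norm_le.mp
    (Metric.isBounded_range_of_tendsto _ (h.comp tendsto_natCast_atTop_atTop))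
  have hMn (n : ℕ) : |summatory a n / n| ≤ M := hM _ ⟨n, rfl⟩
  refine ⟨M, fun x ↦ ?_⟩
  rcases lt_or_ge x 1 with hx | hx
  · simpa [summatory_of_lt_one a hx] using (abs_nonneg _).trans (hMn 0)
  · have hfloor : (0 : ℝ) < ⌊x⌋₊ := by exact_mod_cast Nat.floor_pos.mpr hx
    calc |summatory a x / x| = |summatory a ⌊x⌋₊| / x := by
          rw [abs_div, abs_of_pos (by linarith : 0 < x), summatory, summatory, Nat.floor_natCast]
      _ ≤ |summatory a ⌊x⌋₊| / ⌊x⌋₊ := by gcongr; exact Nat.floor_le (by linarith)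
      _ ≤ M := by simpa [abs_div] using hMn ⌊x⌋₊

lemma tendsto_integral_rpow_mul_div_rpow {r : ℝ → ℝ} (hβ : -1 < β) (hr : Measurable r)
    (hrM : ∀ t, |r t| ≤ M) (hlim : Tendsto r atTop (𝓝 l)) :
    Tendsto (fun x ↦ (∫ t in 0..x, t ^ β * r t) / x ^ (β + 1)) atTop (𝓝 (l / (β + 1))) := by
  have hscaled : Tendsto (fun x ↦ ∫ s in (0 : ℝ)..1, s ^ β * r (x * s)) atTop
      (𝓝 (∫ s in (0 : ℝ)..1, s ^ β * l)) := by
    refine intervalIntegral.tendsto_integral_filter_of_dominated_convergence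
      (fun s ↦ |s ^ β| * M) (.of_forall fun x ↦ by fun_prop) ?_
      ((intervalIntegral.intervalIntegrable_rpow' hβ).abs.mul_const M) ?_
    · refine .of_forall fun x ↦ ae_of_all _ fun s _ ↦ ?_
      rw [norm_mul, norm_eq_abs, norm_eq_abs]
      gcongr
      exact hrM _
    · refine ae_of_all _ fun s hs ↦ (hlim.comp (tendsto_id.atTop_mul_const ?_)).const_mul _
      exact (uIoc_of_le (zero_le_one' ℝ) ▸ hs).1
  have hvalue : ∫ s in (0 : ℝ)..1, s ^ β * l = l / (β + 1) := by
    have hβ' : β + 1 ≠ 0 := by linarith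
    simp [integral_rpow (.inl hβ), zero_rpow hβ', div_eq_inv_mul]
  rw [← hvalue]
  refine hscaled.congr' ?_
  filter_upwards [eventually_gt_atTop 0] with x hx
  have hsub := intervalIntegral.integral_comp_mul_left (a := 0) (b := 1)
    (fun t ↦ t ^ β * r t) hx.ne'
  have hpow : ∫ s in (0 : ℝ)..1, (x * s) ^ β * r (x * s) =
      x ^ β * ∫ s in (0 : ℝ)..1, s ^ β * r (x * s) := by
    rw [← intervalIntegral.integral_const_mul]
    refine intervalIntegral.integral_congr fun s hs ↦ ?_
    rw [mul_rpow hx.le (uIcc_of_le (zero_le_one' ℝ) ▸ hs).1, mul_assoc]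
  rw [hpow, mul_zero, mul_one, smul_eq_mul, eq_inv_mul_iff_mul_eq₀ hx.ne'] at hsub
  rw [← hsub, rpow_add_one hx.ne']
  field_simp

lemma sum_Icc_zero_floor_update (a : ℕ → ℝ) (x : ℝ) :
    ∑ n ∈ Finset.Icc 0 ⌊x⌋₊, Function.update a 0 0 n = summatory a x := by
  rw [summatory, ← Finset.insert_Icc_add_one_left_eq_Icc (Nat.zero_le _),
    Finset.Icc_add_one_left_eq_Ioc, Finset.sum_insert (by simp), Function.update_self, zero_add]
  exact Finset.sum_congr rfl fun n hn ↦ Function.update_of_ne (Finset.mem_Ioc.mp hn).1.ne' _ _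

lemma summatory_mul_eq_sub_integral (a : ℕ → ℝ) {f : ℝ → ℝ} (x : ℝ)
    (hf : ∀ t ∈ Icc 1 x, DifferentiableAt ℝ f t) (hf' : IntegrableOn (deriv f) (Icc 1 x)) :
    summatory (fun n ↦ f n * a n) x =
      f x * summatory a x - ∫ t in Ioc 1 x, deriv f t * summatory a t := by
  have h := sum_mul_eq_sub_integral_mul₀ (Function.update a 0 0) (Function.update_self ..) x hf hf'
  simp only [sum_Icc_zero_floor_update] at h
  rw [← h, ← sum_Icc_zero_floor_update]
  refine Finset.sum_congr rfl fun n _ ↦ ?_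
  rcases eq_or_ne n 0 with rfl | hn
  · simp
  · simp [hn]

lemma summatory_rpow_mul_eq (a : ℕ → ℝ) (α : ℝ) {x : ℝ} (hx : 1 ≤ x) :
    summatory (fun n ↦ (n : ℝ) ^ (-α) * a n) x =
      x ^ (-α) * summatory a x + α * ∫ t in 0..x, t ^ (-α) * (summatory a t / t) := by
  have hderiv {t : ℝ} (ht : t ∈ Icc 1 x) :
      HasDerivAt (fun t : ℝ ↦ t ^ (-α)) (-α * t ^ (-α - 1)) t :=
    hasDerivAt_rpow_const (.inl (by linarith [ht.1]))
  have hcont : ContinuousOn (fun t : ℝ ↦ -α * t ^ (-α - 1)) (Icc 1 x) :=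
    (continuousOn_id.rpow_const fun t ht ↦ .inl (zero_lt_one.trans_le ht.1).ne').const_mul _
  have hfrom_one : ∫ t in 0..x, t ^ (-α) * (summatory a t / t) =
      ∫ t in Ioc 1 x, t ^ (-α) * (summatory a t / t) := by
    rw [intervalIntegral.integral_of_le (by linarith), ← integral_Icc_eq_integral_Ioc (x := 1)]
    refine setIntegral_eq_of_subset_of_forall_sdiff_eq_zero measurableSet_Ioc
      (fun t ht ↦ ⟨by linarith [ht.1], ht.2⟩) fun t ht ↦ ?_
    have ht1 : t < 1 := not_le.mp fun h ↦ ht.2 ⟨h, ht.1.2⟩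
    rw [summatory_of_lt_one a ht1, zero_div, mul_zero]
  rw [summatory_mul_eq_sub_integral a (f := fun t ↦ t ^ (-α)) x
    (fun t ht ↦ (hderiv ht).differentiableAt)
    ((hcont.congr fun t ht ↦ (hderiv ht).deriv).integrableOn_Icc), hfrom_one,
    sub_eq_add_neg, ← integral_neg, ← integral_const_mul]
  congr 1
  refine setIntegral_congr_fun measurableSet_Ioc fun t ht ↦ ?_
  rw [(hderiv (Ioc_subset_Icc_self ht)).deriv, rpow_sub_one (by linarith [ht.1])]
  ring

lemma tendsto_summatory_rpow_mul (hα : α < 1)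
    (h : Tendsto (fun x ↦ summatory a x / x) atTop (𝓝 l)) :
    Tendsto (fun x ↦ summatory (fun n ↦ (n : ℝ) ^ (-α) * a n) x / x ^ (1 - α)) atTop
      (𝓝 (l / (1 - α))) := by
  obtain ⟨M, hM⟩ := exists_abs_summatory_div_le h
  have hint := tendsto_integral_rpow_mul_div_rpow (r := fun t ↦ summatory a t / t) (neg_lt_neg hα)
    ((measurable_summatory a).div measurable_id) hM h
  rw [neg_add_eq_sub] at hint
  have hlim := h.add (hint.const_mul α)
  have hvalue : l + α * (l / (1 - α)) = l / (1 - α) := by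
    have : 1 - α ≠ 0 := by linarith
    field_simp
    ring
  rw [hvalue] at hlim
  refine hlim.congr' ?_
  filter_upwards [eventually_ge_atTop 1] with x hx
  have hx0 : 0 < x := by linarith
  rw [summatory_rpow_mul_eq a α hx, rpow_sub hx0, rpow_one, rpow_neg hx0.le]
  field_simp

lemma summatory_le_add_div_log_two (hc : ∀ n, 0 ≤ c n) (x : ℝ) :
    summatory c x ≤ c 1 + summatory (fun n ↦ c n * log n) x / log 2 := by
  have hlog2 : 0 < log 2 := log_pos one_lt_two
  have hterm (n : ℕ) (hn : n ∈ Finset.Ioc 0 ⌊x⌋₊) :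
      c n ≤ (if n = 1 then c 1 else 0) + c n * log n / log 2 := by
    rcases eq_or_ne n 1 with rfl | hn1
    · simp
    · have hn2 : (2 : ℝ) ≤ n := by
        have := (Finset.mem_Ioc.mp hn).1
        exact_mod_cast (by omega : 2 ≤ n)
      rw [if_neg hn1, zero_add, mul_div_assoc]
      refine le_mul_of_one_le_right (hc n) ((one_le_div hlog2).mpr ?_)
      gcongr
  refine (Finset.sum_le_sum hterm).trans ?_
  rw [Finset.sum_add_distrib, Finset.sum_ite_eq', ← Finset.sum_div]
  gcongr
  · split_ifs
    exacts [le_rfl, hc 1]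
  · exact le_rfl

lemma summatory_mul_log_le (hc : ∀ n, 0 ≤ c n) {η x : ℝ} (hη : 0 < η) (hη1 : η ≤ 1)
    (hx : 1 < x) :
    summatory c x * log x ≤
      (c 1 + summatory (fun n ↦ c n * log n) (x ^ η) / log 2) * log x +
        summatory (fun n ↦ c n * log n) x / η := by
  have hlogx : 0 < log x := log_pos hx
  have hterm (n : ℕ) : 0 ≤ c n * log n := mul_nonneg (hc n) (log_natCast_nonneg n)
  have hsplit : summatory c x = summatory c (x ^ η) + ∑ n ∈ Finset.Ioc ⌊x ^ η⌋₊ ⌊x⌋₊, c n :=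
    (Finset.sum_Ioc_consecutive c (Nat.zero_le _)
      (Nat.floor_mono (rpow_le_self_of_one_le hx.le hη1))).symm
  have hlarge : (∑ n ∈ Finset.Ioc ⌊x ^ η⌋₊ ⌊x⌋₊, c n) * log x ≤
      summatory (fun n ↦ c n * log n) x / η := calc
    _ ≤ ∑ n ∈ Finset.Ioc ⌊x ^ η⌋₊ ⌊x⌋₊, c n * log n / η := by
        rw [Finset.sum_mul]
        refine Finset.sum_le_sum fun n hn ↦ ?_
        have hn : x ^ η < n := Nat.lt_of_floor_lt (Finset.mem_Ioc.mp hn).1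
        rw [mul_div_assoc]
        gcongr
        · exact hc n
        · rw [le_div_iff₀' hη, ← log_rpow (by linarith)]
          gcongr
    _ ≤ _ := by
        rw [← Finset.sum_div]
        gcongr
        exact Finset.sum_le_sum_of_subset_of_nonneg
          (Finset.Ioc_subset_Ioc_left (Nat.zero_le _)) fun n _ _ ↦ hterm n
  rw [hsplit, add_mul]
  gcongr
  exact summatory_le_add_div_log_two hc _

lemma tendsto_comp_rpow_mul_log_div_rpow {T : ℝ → ℝ} {η : ℝ} (hβ : 0 < β) (hη : 0 < η)
    (hη1 : η < 1) (h : Tendsto (fun x ↦ T x / x ^ β) atTop (𝓝 B)) :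
    Tendsto (fun x ↦ T (x ^ η) * log x / x ^ β) atTop (𝓝 0) := by
  have hlog := (isLittleO_log_rpow_atTop (mul_pos (sub_pos.mpr hη1) hβ)).tendsto_div_nhds_zero
  have hlim := (h.comp (tendsto_rpow_atTop hη)).mul hlog
  rw [mul_zero] at hlim
  refine hlim.congr' ?_
  filter_upwards [eventually_gt_atTop 0] with x hx
  have hsplit : x ^ β = (x ^ η) ^ β * x ^ ((1 - η) * β) := by
    rw [← rpow_mul hx.le, ← rpow_add hx]
    ring_nf
  rw [hsplit, Function.comp_apply, div_mul_div_comm]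

lemma tendsto_summatory_mul_log_div_rpow (hc : ∀ n, 0 ≤ c n) (hβ : 0 < β)
    (h : Tendsto (fun x ↦ summatory (fun n ↦ c n * log n) x / x ^ β) atTop (𝓝 B)) :
    Tendsto (fun x ↦ summatory c x * log x / x ^ β) atTop (𝓝 B) := by
  refine tendsto_order.mpr ⟨fun l hl ↦ ?_, fun l hl ↦ ?_⟩
  · filter_upwards [h.eventually_const_lt hl, eventually_gt_atTop 0] with x hxl hx
    refine hxl.trans_le ?_
    rw [summatory, summatory, Finset.sum_mul]
    gcongr with n hn
    · exact hc n
    · exact_mod_cast (Finset.mem_Ioc.mp hn).1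
    · exact (Nat.le_floor_iff hx.le).mp (Finset.mem_Ioc.mp hn).2
  · have hdiv : Tendsto (fun η ↦ B / η) (𝓝[<] 1) (𝓝 B) := by
      have : ContinuousAt (fun η ↦ B / η) 1 := by fun_prop (disch := norm_num)
      simpa using this.tendsto.mono_left nhdsWithin_le_nhds
    obtain ⟨η, hηl, hη, hη1⟩ :=
      ((hdiv.eventually_lt_const hl).and (Ioo_mem_nhdsLT zero_lt_one)).exists
    have hlog := (isLittleO_log_rpow_atTop hβ).tendsto_div_nhds_zero
    have hbound := ((hlog.const_mul (c 1)).add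
      ((tendsto_comp_rpow_mul_log_div_rpow hβ hη hη1 h).div_const (log 2))).add (h.div_const η)
    simp only [mul_zero, zero_div, add_zero, zero_add] at hbound
    filter_upwards [hbound.eventually_lt_const hηl, eventually_gt_atTop 1] with x hxl hx
    refine lt_of_le_of_lt ?_ hxl
    rw [div_le_iff₀ (rpow_pos_of_pos (by linarith) β)]
    refine (summatory_mul_log_le hc hη hη1.le hx).trans_eq ?_
    field_simp

end PartialSummation

section PrimeSums

open Topology

theorem stmt_18_general {α : ℝ} (hα : α < 1) :
    Tendsto (fun x : ℝ ↦
      (∑ p ∈ Finset.filter Nat.Prime (Finset.range (⌊x⌋₊ + 1)), 1 / (p : ℝ) ^ α) *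
        Real.log x / (x ^ (1 - α) / (1 - α))) atTop (nhds 1) := by
  let a : ℕ → ℝ := fun n ↦ if n.Prime then log n else 0
  let c : ℕ → ℝ := fun n ↦ if n.Prime then (n : ℝ) ^ (-α) else 0
  have hθ : Tendsto (fun x ↦ summatory a x / x) atTop (𝓝 1) := by
    simpa only [summatory, a, ← Finset.sum_filter] using! tendsto_theta_div_atTop
  have hc (n : ℕ) : 0 ≤ c n := by
    dsimp only [c]
    split_ifs <;> positivity
  have hac : (fun n : ℕ ↦ (n : ℝ) ^ (-α) * a n) = fun n ↦ c n * log n := by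
    ext n
    simp only [a, c, mul_ite, ite_mul, mul_zero, zero_mul]
  have hα' : 0 < 1 - α := sub_pos.mpr hα
  have hlim := (tendsto_summatory_mul_log_div_rpow hc hα'
    (hac ▸ tendsto_summatory_rpow_mul hα hθ)).mul_const (1 - α)
  rw [div_mul_cancel₀ 1 hα'.ne'] at hlim
  refine hlim.congr fun x ↦ ?_
  have hprimes : summatory c x =
      ∑ p ∈ Finset.filter Nat.Prime (Finset.range (⌊x⌋₊ + 1)), 1 / (p : ℝ) ^ α := by
    rw [summatory, ← Finset.sum_filter]
    refine Finset.sum_congr ?_ fun p _ ↦ by rw [rpow_neg p.cast_nonneg, one_div]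
    ext p
    simp only [Finset.mem_filter, Finset.mem_Ioc, Finset.mem_range, Nat.lt_succ_iff]
    exact ⟨fun h ↦ ⟨h.1.2, h.2⟩, fun h ↦ ⟨⟨h.2.pos, h.1⟩, h.2⟩⟩
  rw [hprimes, div_div_eq_mul_div]
  ring

end PrimeSums

/-- As `x → ∞`, `Σ_{p ≤ x, p prime} 1/√p ∼ 2√x / log x`; that is,
`(Σ_{p ≤ x} 1/√p) · (log x)/(2√x) → 1`. -/
theorem stmt_18 :
    Tendsto (fun x : ℝ =>
      (∑ p ∈ Finset.filter Nat.Prime (Finset.range (⌊x⌋₊ + 1)), 1 / Real.sqrt p) *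
        Real.log x / (2 * Real.sqrt x))
      atTop (nhds 1) := by
  have := stmt_18_general (α := 1 / 2) (by norm_num)
  norm_num [← sqrt_eq_rpow] at this
  simpa [mul_comm] using this
end
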